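/- arXiv:1907.04585 — 4 statements merged into one kernel-verified Lean document; each statement's English description precedes it below -/
import Mathlib

section
/- Let t ≥ 2 be an integer, let α ∈ (0, 1/2) be a real, and let G be a connected P_t-free graph with a weight function w : V(G) → ℕ. Then there exists a nonempty set B ⊆ V(G) with |B| ≤ t − 1 such that every connected component C of G − N[B] satisfies w(C) ≤ (1−α) · w(G). -/
noncomputable section

namespace Paper

/-- The closed neighborhood `N[X]` of a set `X` of vertices. -/
def closedNbhd {V : Type} (G : SimpleGraph V) (X : Set V) : Set V :=
  {v | v ∈ X ∨ ∃ x ∈ X, G.Adj x v}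

/-- The total weight `w(X)` of a set of vertices. -/
def wsum {V : Type} (w : V → ℕ) (X : Set V) : ℕ := ∑ᶠ x ∈ X, w x

/-- `p : Fin m → V` is an induced path in `G` (on `m` vertices). -/
def InducedPathFun {V : Type} (G : SimpleGraph V) {m : ℕ} (p : Fin m → V) : Prop :=
  Function.Injective p ∧
    ∀ i j : Fin m, G.Adj (p i) (p j) ↔ ((i : ℕ) + 1 = (j : ℕ) ∨ (j : ℕ) + 1 = (i : ℕ))

/-- `G` is `P_t`-free: it contains no induced path on `t` vertices. -/
def PtFree {V : Type} (G : SimpleGraph V) (t : ℕ) : Prop :=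
  ∀ p : Fin t → V, ¬ InducedPathFun G p

/-- `C` is a connected component of `G - X`. -/
def IsCompOfDel {V : Type} (G : SimpleGraph V) (X : Set V) (C : Set V) : Prop :=
  ∃ v : ↥(Xᶜ), C = Subtype.val '' {u : ↥(Xᶜ) | (G.induce Xᶜ).Reachable u v}

/-! This is the Gyárfás path argument, run greedily. Call a set heavy if it carries more than half
of the total weight; two heavy sets intersect. Suppose that `p₀, …, pₖ` is an induced path, and
that `A` is a connected heavy set containing `pₖ` whose other vertices avoid `N[{p₀, …, pₖ₋₁}]`.
If `G - N[{p₀, …, pₖ}]` has a heavy component `C`, then `C` meets `A` but misses `pₖ`, so some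
edge `xy` of `G[A]` enters `C`. As `x` is outside `C`, it lies in `N[{p₀, …, pₖ}]`, and `x ≠ pₖ`
because `pₖ` has no neighbor in `C`; being in `A`, it is adjacent to `pₖ` and to no earlier
vertex. Hence `x` extends the path, with `C ∪ {x}` in place of `A`. The process starts at any
vertex `p₀` of a heavy component `A` of `G - N[v]`, for an arbitrary `v`. A `P_t`-free graph stops
it before the path has `t` vertices. -/

variable {V : Type} {G : SimpleGraph V} {w : V → ℕ}

section ClosedNbhd

variable {X Y : Set V}

theorem subset_closedNbhd : X ⊆ closedNbhd G X :=
  fun _ hv => Or.inl hv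

theorem closedNbhd_union : closedNbhd G (X ∪ Y) = closedNbhd G X ∪ closedNbhd G Y := by
  ext v
  simp only [closedNbhd, Set.mem_union, Set.mem_ofPred_eq]
  grind

theorem mem_closedNbhd_singleton {u v : V} : v ∈ closedNbhd G {u} ↔ v = u ∨ G.Adj u v := by
  simp [closedNbhd]

theorem closedNbhd_range_eq_union {k : ℕ} (p : Fin (k + 1) → V) :
    closedNbhd G (Set.range p) =
      closedNbhd G {p (Fin.last k)} ∪ closedNbhd G (Set.range (Fin.init p)) := by
  conv_lhs => rw [← Fin.snoc_init_self p, Fin.range_snoc, Set.insert_eq, closedNbhd_union]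

end ClosedNbhd

section Connectivity

theorem exists_adj_of_preconnected_induce {A S : Set V} (hA : (G.induce A).Preconnected) {u v : V}
    (hu : u ∈ A) (hv : v ∈ A) (huS : u ∉ S) (hvS : v ∈ S) :
    ∃ x ∈ A, ∃ y ∈ A, x ∉ S ∧ y ∈ S ∧ G.Adj x y := by
  obtain ⟨walk⟩ := hA ⟨u, hu⟩ ⟨v, hv⟩
  obtain ⟨d, -, hfst, hsnd⟩ :=
    walk.exists_boundary_dart (Subtype.val ⁻¹' Sᶜ) huS (fun h => h hvS)
  exact ⟨d.fst, d.fst.2, d.snd, d.snd.2, hfst, not_not.1 hsnd, d.adj⟩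

theorem connected_induce_insert {A : Set V} (hA : (G.induce A).Preconnected) {x y : V}
    (hy : y ∈ A) (hxy : G.Adj x y) : (G.induce (insert x A)).Connected := by
  rw [Set.insert_eq]
  exact SimpleGraph.connected_induce_union .of_subsingleton hA (Set.mem_singleton x) hy hxy

namespace IsCompOfDel

variable {X C : Set V}

theorem disjoint (hC : IsCompOfDel G X C) : Disjoint C X := by
  obtain ⟨v, rfl⟩ := hC
  rw [Set.disjoint_left]
  rintro _ ⟨u, -, rfl⟩
  exact u.2

theorem mem_of_adj (hC : IsCompOfDel G X C) {x y : V} (hx : x ∈ C) (hxy : G.Adj x y)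
    (hy : y ∉ X) : y ∈ C := by
  obtain ⟨v, rfl⟩ := hC
  obtain ⟨u, hu, rfl⟩ := hx
  have hadj : (G.induce Xᶜ).Adj ⟨y, hy⟩ u := hxy.symm
  exact ⟨⟨y, hy⟩, hadj.reachable.trans hu, rfl⟩

theorem connected (hC : IsCompOfDel G X C) : (G.induce C).Connected := by
  obtain ⟨v, rfl⟩ := hC
  let K := (G.induce Xᶜ).connectedComponentMk v
  have hK : K.supp = {u | (G.induce Xᶜ).Reachable u v} :=
    Set.ext fun u => SimpleGraph.ConnectedComponent.eq
  rw [← hK]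
  let toImage : K.toSimpleGraph →g G.induce (Subtype.val '' K.supp) :=
    ⟨fun u => ⟨u.1, u.1, u.2, rfl⟩, fun h => h⟩
  refine K.connected_toSimpleGraph.map toImage ?_
  rintro ⟨_, u, hu, rfl⟩
  exact ⟨⟨u, hu⟩, rfl⟩

end IsCompOfDel

end Connectivity

section Weight

variable {A B : Set V}

theorem wsum_union_of_disjoint (hw : w.HasFiniteSupport) (h : Disjoint A B) :
    wsum w (A ∪ B) = wsum w A + wsum w B :=
  finsum_mem_union' h (hw.subset Set.inter_subset_right) (hw.subset Set.inter_subset_right)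

theorem wsum_mono (hw : w.HasFiniteSupport) (h : A ⊆ B) : wsum w A ≤ wsum w B := by
  rw [← Set.union_sdiff_cancel h, wsum_union_of_disjoint hw Set.disjoint_sdiff_right]
  exact Nat.le_add_right _ _

/-- A set of vertices is heavy if it carries more than half of the total weight; multiplying by `2`
avoids rounding in `ℕ`. -/
def IsHeavy (w : V → ℕ) (A : Set V) : Prop :=
  wsum w Set.univ < 2 * wsum w A

theorem IsHeavy.mono (hw : w.HasFiniteSupport) (hA : IsHeavy w A) (h : A ⊆ B) : IsHeavy w B :=
  hA.trans_le (Nat.mul_le_mul_left 2 (wsum_mono hw h))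

theorem IsHeavy.inter_nonempty (hw : w.HasFiniteSupport) (hA : IsHeavy w A) (hB : IsHeavy w B) :
    (A ∩ B).Nonempty := by
  rw [← Set.not_disjoint_iff_nonempty_inter]
  intro hdisj
  have hsum : wsum w A + wsum w B ≤ wsum w Set.univ :=
    wsum_union_of_disjoint hw hdisj ▸ wsum_mono hw (Set.subset_univ _)
  unfold IsHeavy at hA hB
  omega

end Weight

section InducedPath

theorem inducedPathFun_of_le_one {m : ℕ} (hm : m ≤ 1) (p : Fin m → V) :
    InducedPathFun G p := by
  have := Fin.subsingleton_iff_le_one.2 hm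
  refine ⟨Function.injective_of_subsingleton p, fun i j => ?_⟩
  simp [Subsingleton.elim i j]

theorem PtFree.two_le [Nonempty V] {t : ℕ} (hfree : PtFree G t) : 2 ≤ t := by
  by_contra! ht
  exact hfree (fun _ => Classical.arbitrary V)
    (inducedPathFun_of_le_one (Nat.le_of_lt_succ ht) _)

theorem InducedPathFun.snoc {k : ℕ} {p : Fin (k + 1) → V} (hp : InducedPathFun G p) {x : V}
    (hx : x ∉ Set.range p) (hadj : ∀ i, G.Adj (p i) x ↔ i = Fin.last k) :
    InducedPathFun G (Fin.snoc p x : Fin (k + 2) → V) := by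
  refine ⟨Fin.snoc_injective_of_injective hp.1 hx, fun i j => ?_⟩
  cases i using Fin.lastCases <;> cases j using Fin.lastCases
  case last.last => simp
  case last.cast j =>
    simp only [Fin.snoc_last, Fin.snoc_castSucc, G.adj_comm x, hadj, Fin.ext_iff, Fin.val_last,
      Fin.val_castSucc]
    omega
  case cast.last i =>
    simp only [Fin.snoc_last, Fin.snoc_castSucc, hadj, Fin.ext_iff, Fin.val_last, Fin.val_castSucc]
    omega
  case cast.cast i j => simpa only [Fin.snoc_castSucc, Fin.val_castSucc] using hp.2 i j

end InducedPath

section GyarfasPath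

/-- A stage of the Gyárfás path argument: an induced path `p` whose last vertex lies in a connected
heavy set `A`, all other vertices of which avoid the closed neighborhood of `p` without its last
vertex. -/
structure IsGyarfasPath (G : SimpleGraph V) (w : V → ℕ) {k : ℕ} (p : Fin (k + 1) → V)
    (A : Set V) : Prop where
  inducedPath : InducedPathFun G p
  last_mem : p (Fin.last k) ∈ A
  connected : (G.induce A).Connected
  heavy : IsHeavy w A
  disjoint_init : Disjoint (A \ {p (Fin.last k)}) (closedNbhd G (Set.range (Fin.init p)))

theorem isGyarfasPath_const {A : Set V} {v : V} (hA : (G.induce A).Connected)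
    (hheavy : IsHeavy w A) (hv : v ∈ A) : IsGyarfasPath G w (fun _ : Fin 1 => v) A where
  inducedPath := inducedPathFun_of_le_one le_rfl _
  last_mem := hv
  connected := hA
  heavy := hheavy
  disjoint_init := by simp [closedNbhd]

namespace IsGyarfasPath

variable {k : ℕ} {p : Fin (k + 1) → V} {A C : Set V}

theorem inducedPathFun_snoc (h : IsGyarfasPath G w p A) {x : V} (hxA : x ∈ A)
    (hx_last : x ≠ p (Fin.last k)) (hx : x ∈ closedNbhd G (Set.range p)) :
    InducedPathFun G (Fin.snoc p x : Fin (k + 2) → V) := by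
  have hx_init : x ∉ closedNbhd G (Set.range (Fin.init p)) :=
    Set.disjoint_left.1 h.disjoint_init ⟨hxA, hx_last⟩
  have hadj_last : G.Adj (p (Fin.last k)) x := by
    rw [closedNbhd_range_eq_union] at hx
    exact (mem_closedNbhd_singleton.1 (hx.resolve_right hx_init)).resolve_left hx_last
  refine h.inducedPath.snoc ?_ fun i => ⟨fun hadj => ?_, fun hi => hi ▸ hadj_last⟩
  · rintro ⟨i, rfl⟩
    cases i using Fin.lastCases with
    | last => exact hx_last rfl
    | cast i => exact hx_init (subset_closedNbhd ⟨i, rfl⟩)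
  · cases i using Fin.lastCases with
    | last => rfl
    | cast i => exact absurd (Or.inr ⟨_, ⟨i, rfl⟩, hadj⟩) hx_init

theorem exists_adj_comp (hw : w.HasFiniteSupport) (h : IsGyarfasPath G w p A)
    (hC : IsCompOfDel G (closedNbhd G (Set.range p)) C) (hheavy : IsHeavy w C) :
    ∃ x ∈ A, x ≠ p (Fin.last k) ∧ x ∈ closedNbhd G (Set.range p) ∧ ∃ y ∈ C, G.Adj x y := by
  have hC_avoids : ∀ c ∈ C, c ∉ closedNbhd G (Set.range p) :=
    fun _ hc => Set.disjoint_left.1 hC.disjoint hc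
  have hlast : p (Fin.last k) ∉ C :=
    fun hmem => hC_avoids _ hmem (subset_closedNbhd (Set.mem_range_self _))
  obtain ⟨a, haA, haC⟩ := h.heavy.inter_nonempty hw hheavy
  obtain ⟨x, hxA, y, -, hxC, hyC, hxy⟩ :=
    exists_adj_of_preconnected_induce h.connected.preconnected h.last_mem haA hlast haC
  refine ⟨x, hxA, ?_, ?_, y, hyC, hxy⟩
  · rintro rfl
    exact hC_avoids y hyC (Or.inr ⟨_, Set.mem_range_self _, hxy⟩)
  · by_contra hx
    exact hxC (hC.mem_of_adj hyC hxy.symm hx)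

theorem exists_snoc (hw : w.HasFiniteSupport) (h : IsGyarfasPath G w p A)
    (hC : IsCompOfDel G (closedNbhd G (Set.range p)) C) (hheavy : IsHeavy w C) :
    ∃ x, IsGyarfasPath G w (Fin.snoc p x : Fin (k + 2) → V) (insert x C) := by
  obtain ⟨x, hxA, hx_last, hx, y, hyC, hxy⟩ := h.exists_adj_comp hw hC hheavy
  refine ⟨x, h.inducedPathFun_snoc hxA hx_last hx, ?_,
    connected_induce_insert hC.connected.preconnected hyC hxy,
    hheavy.mono hw (Set.subset_insert x C), ?_⟩
  · rw [Fin.snoc_last]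
    exact Set.mem_insert x C
  · rw [Fin.snoc_last, Fin.init_snoc]
    exact hC.disjoint.mono_left (by simp)

end IsGyarfasPath

theorem exists_isGyarfasPath (hw : w.HasFiniteSupport) {A : Set V}
    (hA : (G.induce A).Connected) (hA_heavy : IsHeavy w A) (n : ℕ)
    (hcomp : ∀ k < n, ∀ p : Fin (k + 1) → V, InducedPathFun G p →
      ∃ C, IsCompOfDel G (closedNbhd G (Set.range p)) C ∧ IsHeavy w C) :
    ∃ (p : Fin (n + 1) → V) (D : Set V), IsGyarfasPath G w p D := by
  induction n with
  | zero =>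
    obtain ⟨v, hv⟩ := hA.nonempty
    exact ⟨_, A, isGyarfasPath_const hA hA_heavy hv⟩
  | succ n ih =>
    obtain ⟨p, D, hp⟩ := ih fun k hk => hcomp k (hk.trans n.lt_succ_self)
    obtain ⟨C, hC, hC_heavy⟩ := hcomp n n.lt_succ_self p hp.inducedPath
    obtain ⟨x, hx⟩ := hp.exists_snoc hw hC hC_heavy
    exact ⟨_, _, hx⟩

theorem PtFree.exists_inducedPathFun_forall_not_isHeavy [Nonempty V] {t : ℕ} (hfree : PtFree G t)
    (hw : w.HasFiniteSupport) :
    ∃ k, k + 1 < t ∧ ∃ p : Fin (k + 1) → V, InducedPathFun G p ∧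
      ∀ C, IsCompOfDel G (closedNbhd G (Set.range p)) C → ¬ IsHeavy w C := by
  obtain ⟨n, rfl⟩ := Nat.exists_eq_add_of_le' hfree.two_le
  by_contra! hcomp
  obtain ⟨A, hA, hA_heavy⟩ := hcomp 0 (by omega) (fun _ => Classical.arbitrary V)
    (inducedPathFun_of_le_one le_rfl _)
  obtain ⟨p, _, hp⟩ := exists_isGyarfasPath hw hA.connected hA_heavy (n + 1)
    fun k hk => hcomp k (Nat.succ_lt_succ hk)
  exact hfree p hp.inducedPath

end GyarfasPath

theorem stmt2_general {V : Type} [Nonempty V] {t : ℕ} {G : SimpleGraph V} (hfree : PtFree G t)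
    {w : V → ℕ} (hw : w.HasFiniteSupport) :
    ∃ B : Set V, B.Nonempty ∧ B.Finite ∧ B.ncard ≤ t - 1 ∧
      ∀ C : Set V, IsCompOfDel G (closedNbhd G B) C → 2 * wsum w C ≤ wsum w Set.univ := by
  obtain ⟨k, hk, p, hp, hlight⟩ := hfree.exists_inducedPathFun_forall_not_isHeavy hw
  refine ⟨Set.range p, Set.range_nonempty p, Set.finite_range p, ?_,
    fun C hC => not_lt.1 (hlight C hC)⟩
  rw [Set.ncard_range_of_injective hp.1, Nat.card_fin]
  exact Nat.le_sub_one_of_lt hk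

/-- in a connected `P_t`-free graph `G` with weight function `w` and every
real `α ∈ (0,1/2)`, there is a nonempty set `B` of at most `t-1` vertices such that every
connected component of `G - N[B]` has weight at most `(1-α)·w(G)`. -/
theorem stmt2 {V : Type} [Fintype V] (t : ℕ) (ht : 2 ≤ t) (G : SimpleGraph V)
    (hconn : G.Connected) (hfree : PtFree G t) (w : V → ℕ)
    (α : ℝ) (hα0 : 0 < α) (hα1 : α < 1 / 2) :
    ∃ B : Set V, B.Nonempty ∧ B.ncard ≤ t - 1 ∧
      ∀ C : Set V, IsCompOfDel G (closedNbhd G B) C →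
        (wsum w C : ℝ) ≤ (1 - α) * (wsum w Set.univ : ℝ) := by
  have := hconn.nonempty
  obtain ⟨B, hB, -, hcard, hlight⟩ := stmt2_general hfree (w := w) (Set.toFinite _)
  refine ⟨B, hB, hcard, fun C hC => ?_⟩
  have hhalf : (2 * wsum w C : ℝ) ≤ wsum w Set.univ := mod_cast hlight C hC
  nlinarith [(wsum w Set.univ).cast_nonneg (α := ℝ)]

end Paper
end
end

section
/- For every integer t ≥ 4 there exists a constant c_t such that every C_{≥t}-free graph G has treewidth at most c_t · Δ(G), where Δ(G) is the maximum degree of G. -/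
noncomputable section

namespace Paper

/-- `p : Fin k → V` is an induced cycle in `G` (on `k` vertices). -/
def IsInducedCycle {V : Type} (G : SimpleGraph V) {k : ℕ} (p : Fin k → V) : Prop :=
  Function.Injective p ∧
    ∀ i j : Fin k, G.Adj (p i) (p j) ↔
      (((i : ℕ) + 1) % k = (j : ℕ) ∨ ((j : ℕ) + 1) % k = (i : ℕ))

/-- `G` is `C_{≥t}`-free: it contains no induced cycle on at least `t` vertices. -/
def CgeFree {V : Type} (G : SimpleGraph V) (t : ℕ) : Prop :=
  ∀ k, t ≤ k → ∀ p : Fin k → V, ¬ IsInducedCycle G p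

/-!
Search `G` like a cop team chasing a robber confined to a component `C` of the unsearched part,
keeping an induced path `P` that has no neighbour in `C` and whose neighbourhood contains `N(C)`.
If `P` is as short as possible, each end of `P` has a private neighbour in `N(C)`: `y` at the last
vertex and `x` at the first. A shortest path from `y` to `x` through `C` closes `P` to an induced
cycle, so `|P| + 1 < t`. The new bag `N(C) ∪ (C ∩ N[y])` lies in `{y} ∪ N(P ∪ {y})`, hence has at
most `t · Δ(G) + 1` vertices, and the induced path `P ∪ {y}` guards every component of what is left
of `C`.
-/

open SimpleGraph

section Connectivity

variable {V W : Type*} {G : SimpleGraph V} {H : SimpleGraph W}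

lemma connected_induce_image (f : G →g H) {A : Set V} (hA : (G.induce A).Connected) :
    (H.induce (f '' A)).Connected :=
  hA.map (induceHom f (Set.mapsTo_image f A)) (Set.surjective_mapsTo_image_restrict f A)

lemma connected_induce_singleton (v : V) : (G.induce {v}).Connected :=
  IsTree.of_subsingleton.connected

lemma connected_induce_insert_of_adj {A : Set V} {a b : V} (hA : (G.induce A).Connected)
    (ha : a ∈ A) (hab : G.Adj a b) : (G.induce (insert b A)).Connected := by
  rw [← Set.union_singleton]
  exact connected_induce_union hA.preconnected (connected_induce_singleton b).preconnected ha
    rfl hab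

/-- The outer vertex boundary `N(C)` of a vertex set `C`. -/
def outerBoundary (G : SimpleGraph V) (C : Set V) : Set V :=
  {s | s ∉ C ∧ ∃ w ∈ C, G.Adj w s}

lemma subset_of_connected_of_disjoint_outerBoundary {C D : Set V} (hD : (G.induce D).Connected)
    (hDC : (D ∩ C).Nonempty) (hdisj : Disjoint D (outerBoundary G C)) : D ⊆ C := by
  obtain ⟨a, haD, haC⟩ := hDC
  intro b hbD
  by_contra hbC
  obtain ⟨walk⟩ := hD.preconnected ⟨a, haD⟩ ⟨b, hbD⟩
  obtain ⟨d, -, hfst, hsnd⟩ := walk.exists_boundary_dart (Subtype.val ⁻¹' C) haC hbC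
  exact hdisj.notMem_of_mem_left d.snd.2 ⟨hsnd, d.fst, hfst, d.adj⟩

lemma exists_connected_outerBoundary_subset {U : Set V} {v : V} (hv : v ∉ U) :
    ∃ C, v ∈ C ∧ (G.induce C).Connected ∧ Disjoint C U ∧ outerBoundary G C ⊆ U := by
  let K := (G.induce Uᶜ).connectedComponentMk ⟨v, hv⟩
  refine ⟨Subtype.val '' K.supp, ⟨_, rfl, rfl⟩,
    connected_induce_image (Embedding.induce Uᶜ).toHom K.connected_toSimpleGraph, ?_, ?_⟩
  · rw [Set.disjoint_left]
    rintro _ ⟨w, -, rfl⟩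
    exact w.2
  · rintro s ⟨hsK, _, ⟨w, hw, rfl⟩, hws⟩
    by_contra hsU
    have hadj : (G.induce Uᶜ).Adj w ⟨s, hsU⟩ := hws
    exact hsK ⟨⟨s, hsU⟩, K.mem_supp_of_adj_mem_supp hw hadj, rfl⟩

end Connectivity

section AddLeaf

variable {n : ℕ}

/-- The graph obtained from `T` by joining a new vertex `Fin.last n` to the vertex `y`. -/
def addLeaf (T : SimpleGraph (Fin n)) (y : Fin n) : SimpleGraph (Fin (n + 1)) :=
  T.map Fin.castSuccEmb ⊔ edge y.castSucc (Fin.last n)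

variable {T : SimpleGraph (Fin n)} {y : Fin n}

lemma addLeaf_adj_castSucc_last : (addLeaf T y).Adj y.castSucc (Fin.last n) :=
  Or.inr ((edge_adj ..).2 ⟨Or.inl ⟨rfl, rfl⟩, y.castSucc_ne_last⟩)

lemma connected_induce_addLeaf_image_castSucc {A : Set (Fin n)} (hA : (T.induce A).Connected) :
    ((addLeaf T y).induce (Fin.castSucc '' A)).Connected :=
  connected_induce_image ((Hom.ofLE le_sup_left).comp (Embedding.map Fin.castSuccEmb T).toHom) hA

lemma connected_addLeaf (hT : T.Connected) : (addLeaf T y).Connected := by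
  have hcast := connected_induce_addLeaf_image_castSucc (y := y)
    ((induceUnivIso T).connected_iff.2 hT)
  have hleaf := connected_induce_insert_of_adj hcast ⟨y, trivial, rfl⟩ addLeaf_adj_castSucc_last
  have huniv : insert (Fin.last n) (Fin.castSucc '' Set.univ) = Set.univ :=
    Set.eq_univ_of_forall (Fin.lastCases (Set.mem_insert _ _) fun x => Or.inr ⟨x, trivial, rfl⟩)
  rw [huniv] at hleaf
  exact (induceUnivIso _).connected_iff.1 hleaf

lemma isTree_addLeaf (hT : T.IsTree) : (addLeaf T y).IsTree := by
  have hconn : (addLeaf T y).Connected := connected_addLeaf hT.connected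
  have hcardT : T.edgeSet.ncard + 1 = n := by
    simpa using (isTree_iff_connected_and_card.1 hT).2
  have hedges : (addLeaf T y).edgeSet =
      insert s(y.castSucc, Fin.last n) (Fin.castSuccEmb.sym2Map '' T.edgeSet) := by
    rw [addLeaf, edgeSet_sup, edgeSet_map, edgeSet_edge_of_ne y.castSucc_ne_last,
      Set.union_singleton]
  have hle : (addLeaf T y).edgeSet.ncard ≤ n := calc
    (addLeaf T y).edgeSet.ncard ≤ (Fin.castSuccEmb.sym2Map '' T.edgeSet).ncard + 1 :=
      hedges ▸ Set.ncard_insert_le _ _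
    _ ≤ T.edgeSet.ncard + 1 := Nat.succ_le_succ (Set.ncard_image_le T.edgeSet.toFinite)
    _ = n := hcardT
  refine isTree_iff_connected_and_card.2
    ⟨hconn, le_antisymm ?_ hconn.card_vert_le_card_edgeSet_add_one⟩
  simpa using hle

end AddLeaf

section TreeDecomposition

variable {V : Type*} {G : SimpleGraph V} {U X : Set V} {n : ℕ} {T : SimpleGraph (Fin n)}
  {B : Fin n → Set V}

/-- `(T, B)` is a tree decomposition of the subgraph of `G` induced on `U`. That the bags cover
`U` is part of `connected_bags`, since connected graphs are nonempty. -/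
structure IsTreeDecompositionOn (G : SimpleGraph V) (U : Set V) (T : SimpleGraph (Fin n))
    (B : Fin n → Set V) : Prop where
  isTree : T.IsTree
  bag_subset : ∀ x, B x ⊆ U
  exists_bag_of_adj : ∀ u ∈ U, ∀ v ∈ U, G.Adj u v → ∃ x, u ∈ B x ∧ v ∈ B x
  connected_bags : ∀ v ∈ U, (T.induce {x | v ∈ B x}).Connected

lemma isTreeDecompositionOn_empty :
    IsTreeDecompositionOn G ∅ (⊥ : SimpleGraph (Fin 1)) fun _ => ∅ where
  isTree := .of_subsingleton
  bag_subset _ := subset_rfl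
  exists_bag_of_adj _ hu := hu.elim
  connected_bags _ hv := hv.elim

namespace IsTreeDecompositionOn

lemma exists_mem_bag (h : IsTreeDecompositionOn G U T B) {v : V} (hv : v ∈ U) : ∃ x, v ∈ B x :=
  let ⟨x⟩ := (h.connected_bags v hv).nonempty
  ⟨x.1, x.2⟩

lemma connected_bags_addLeaf (h : IsTreeDecompositionOn G U T B) {y : Fin n}
    (hXU : X ∩ U ⊆ B y) {v : V} (hv : v ∈ U ∪ X) :
    ((addLeaf T y).induce
      {x | v ∈ (Fin.snoc B X : Fin (n + 1) → Set V) x}).Connected := by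
  by_cases hvU : v ∈ U
  · have hold := connected_induce_addLeaf_image_castSucc (y := y) (h.connected_bags v hvU)
    by_cases hvX : v ∈ X
    · have hbags : {x | v ∈ (Fin.snoc B X : Fin (n + 1) → Set V) x} =
          insert (Fin.last n) (Fin.castSucc '' {x | v ∈ B x}) := by
        ext x
        cases x using Fin.lastCases <;> simp [hvX, Fin.castSucc_ne_last]
      rw [hbags]
      exact connected_induce_insert_of_adj hold ⟨y, hXU ⟨hvX, hvU⟩, rfl⟩ addLeaf_adj_castSucc_last
    · have hbags : {x | v ∈ (Fin.snoc B X : Fin (n + 1) → Set V) x} =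
          Fin.castSucc '' {x | v ∈ B x} := by
        ext x
        cases x using Fin.lastCases <;> simp [hvX, Fin.castSucc_ne_last]
      rwa [hbags]
  · have hvB (x : Fin n) : v ∉ B x := fun hvx => hvU (h.bag_subset x hvx)
    have hbags : {x | v ∈ (Fin.snoc B X : Fin (n + 1) → Set V) x} = {Fin.last n} := by
      ext x
      cases x using Fin.lastCases <;> simp [hvB, hv.resolve_left hvU, Fin.castSucc_ne_last]
    rw [hbags]
    exact connected_induce_singleton _

lemma addLeaf (h : IsTreeDecompositionOn G U T B) {y : Fin n} (hXU : X ∩ U ⊆ B y)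
    (hadj : ∀ u ∈ X, u ∉ U → ∀ v ∈ U, G.Adj u v → v ∈ X) :
    IsTreeDecompositionOn G (U ∪ X) (addLeaf T y) (Fin.snoc B X : Fin (n + 1) → Set V) where
  isTree := isTree_addLeaf h.isTree
  bag_subset := by
    refine Fin.lastCases ?_ fun x => ?_
    · rw [Fin.snoc_last]
      exact Set.subset_union_right
    · rw [Fin.snoc_castSucc]
      exact (h.bag_subset x).trans Set.subset_union_left
  exists_bag_of_adj u hu v hv huv := by
    by_cases hold : u ∈ U ∧ v ∈ U
    · obtain ⟨x, hux, hvx⟩ := h.exists_bag_of_adj u hold.1 v hold.2 huv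
      exact ⟨x.castSucc, by simpa using hux, by simpa using hvx⟩
    · have hnew : u ∈ X ∧ v ∈ X := by
        have huv' := huv.symm
        grind
      exact ⟨Fin.last n, by simpa using hnew⟩
  connected_bags _ := h.connected_bags_addLeaf hXU

end IsTreeDecompositionOn

end TreeDecomposition

section Search

variable {V : Type*} {G : SimpleGraph V}

/-- A stage of a monotone search of `G`: the part `U` searched so far has a tree decomposition
with bags of size at most `b`, and every component `C` of `G - U` satisfies the invariant `Q`
and has its whole boundary in one bag. -/
structure IsSearchStage (G : SimpleGraph V) (Q : Set V → Prop) (b : ℕ) (U : Set V) {n : ℕ}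
    (T : SimpleGraph (Fin n)) (B : Fin n → Set V) : Prop extends
    IsTreeDecompositionOn G U T B where
  ncard_bag_le : ∀ x, (B x).ncard ≤ b
  invariant : ∀ C, (G.induce C).Connected → Disjoint C U → outerBoundary G C ⊆ U → Q C
  exists_boundary_subset_bag : ∀ C, (G.induce C).Connected → Disjoint C U →
    outerBoundary G C ⊆ U → ∃ x, outerBoundary G C ⊆ B x

lemma isSearchStage_empty {Q : Set V → Prop} (b : ℕ)
    (hQ : ∀ C, (G.induce C).Connected → outerBoundary G C = ∅ → Q C) :
    IsSearchStage G Q b ∅ (⊥ : SimpleGraph (Fin 1)) fun _ => ∅ where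
  toIsTreeDecompositionOn := isTreeDecompositionOn_empty
  ncard_bag_le _ := by simp
  invariant C hC _ hN := hQ C hC (Set.subset_empty_iff.1 hN)
  exists_boundary_subset_bag _ _ _ hN := ⟨0, hN⟩

lemma subset_diff_or_outerBoundary_subset {U C X D : Set V} (hCU : Disjoint C U)
    (hNC : outerBoundary G C ⊆ U) (hXC : X ⊆ C) (hD : (G.induce D).Connected)
    (hDU : Disjoint D (U ∪ (outerBoundary G C ∪ X)))
    (hND : outerBoundary G D ⊆ U ∪ (outerBoundary G C ∪ X)) :
    (D ⊆ C \ X ∧ outerBoundary G D ⊆ outerBoundary G C ∪ X) ∨ outerBoundary G D ⊆ U := by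
  simp only [Set.disjoint_union_right] at hDU
  rcases (D ∩ C).eq_empty_or_nonempty with hdisj | hmeet
  · right
    intro s hs
    obtain ⟨w, hwD, hws⟩ := hs.2
    have hsX : s ∉ X := fun hsX => hDU.1.notMem_of_mem_left hwD <|
      hNC ⟨fun hwC => hdisj.subset ⟨hwD, hwC⟩, s, hXC hsX, hws.symm⟩
    exact (hND hs).elim id fun h => hNC (h.resolve_right hsX)
  · left
    have hDC := subset_of_connected_of_disjoint_outerBoundary hD hmeet hDU.2.1
    refine ⟨Set.subset_sdiff.2 ⟨hDC, hDU.2.2⟩, fun s hs => (hND hs).elim (fun hsU => Or.inl ?_) id⟩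
    obtain ⟨-, w, hwD, hws⟩ := hs
    exact ⟨fun hsC => hCU.notMem_of_mem_left hsC hsU, w, hDC hwD, hws⟩

lemma IsSearchStage.addLeaf {Q : Set V → Prop} {b n : ℕ} {U C X : Set V}
    {T : SimpleGraph (Fin n)} {B : Fin n → Set V} (h : IsSearchStage G Q b U T B) {y : Fin n}
    (hCU : Disjoint C U) (hNC : outerBoundary G C ⊆ U) (hy : outerBoundary G C ⊆ B y)
    (hXC : X ⊆ C) (hcard : (outerBoundary G C ∪ X).ncard ≤ b)
    (hQ : ∀ D ⊆ C \ X, (G.induce D).Connected →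
      outerBoundary G D ⊆ outerBoundary G C ∪ X → Q D) :
    IsSearchStage G Q b (U ∪ (outerBoundary G C ∪ X)) (Paper.addLeaf T y)
      (Fin.snoc B (outerBoundary G C ∪ X) : Fin (n + 1) → Set V) where
  toIsTreeDecompositionOn := by
    refine h.toIsTreeDecompositionOn.addLeaf ?_ ?_
    · rintro s ⟨hs | hsX, hsU⟩
      · exact hy hs
      · exact (hCU.notMem_of_mem_left (hXC hsX) hsU).elim
    · intro u hu huU v hvU huv
      have huC : u ∈ C := hXC (hu.resolve_left fun hu => huU (hNC hu))
      exact Or.inl ⟨fun hvC => hCU.notMem_of_mem_left hvC hvU, u, huC, huv⟩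
  ncard_bag_le := by
    refine Fin.lastCases ?_ fun x => ?_
    · rwa [Fin.snoc_last]
    · rw [Fin.snoc_castSucc]
      exact h.ncard_bag_le x
  invariant D hD hDU hND := by
    rcases subset_diff_or_outerBoundary_subset hCU hNC hXC hD hDU hND with ⟨hDC, hN⟩ | hN
    · exact hQ D hDC hD hN
    · exact h.invariant D hD (hDU.mono_right Set.subset_union_left) hN
  exists_boundary_subset_bag D hD hDU hND := by
    rcases subset_diff_or_outerBoundary_subset hCU hNC hXC hD hDU hND with ⟨-, hN⟩ | hN
    · exact ⟨Fin.last n, by rwa [Fin.snoc_last]⟩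
    · obtain ⟨x, hx⟩ :=
        h.exists_boundary_subset_bag D hD (hDU.mono_right Set.subset_union_left) hN
      exact ⟨x.castSucc, by rwa [Fin.snoc_castSucc]⟩

theorem exists_isTreeDecompositionOn_univ_of_search [Finite V] {Q : Set V → Prop} {b : ℕ}
    (hbase : ∀ C, (G.induce C).Connected → outerBoundary G C = ∅ → Q C)
    (hstep : ∀ C, (G.induce C).Connected → Q C →
      ∃ X ⊆ C, X.Nonempty ∧ (outerBoundary G C ∪ X).ncard ≤ b ∧
        ∀ D ⊆ C \ X, (G.induce D).Connected →
          outerBoundary G D ⊆ outerBoundary G C ∪ X → Q D) :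
    ∃ (n : ℕ) (T : SimpleGraph (Fin n)) (B : Fin n → Set V),
      IsTreeDecompositionOn G Set.univ T B ∧ ∀ x, (B x).ncard ≤ b := by
  let searched : Set (Set V) :=
    {U | ∃ (n : ℕ) (T : SimpleGraph (Fin n)) (B : Fin n → Set V), IsSearchStage G Q b U T B}
  obtain ⟨U, ⟨n, T, B, h⟩, hmax⟩ :=
    searched.toFinite.exists_maximal ⟨∅, 1, _, _, isSearchStage_empty b hbase⟩
  suffices hU : U = Set.univ from
    ⟨n, T, B, hU ▸ h.toIsTreeDecompositionOn, h.ncard_bag_le⟩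
  refine Set.eq_univ_of_forall fun v => by_contra fun hv => ?_
  obtain ⟨C, -, hC, hCU, hNC⟩ := exists_connected_outerBoundary_subset (G := G) hv
  obtain ⟨X, hXC, ⟨w, hwX⟩, hcard, hQ⟩ := hstep C hC (h.invariant C hC hCU hNC)
  obtain ⟨y, hy⟩ := h.exists_boundary_subset_bag C hC hCU hNC
  have hwU : w ∈ U := hmax ⟨_, _, _, h.addLeaf hCU hNC hy hXC hcard hQ⟩
    Set.subset_union_left (Or.inr (Or.inr hwX))
  exact hCU.notMem_of_mem_left (hXC hwX) hwU

end Search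

section Guards

variable {V : Type*} {G : SimpleGraph V} {P C D : Set V}

/-- `P` guards `C` if `P` is disjoint from `C` and has no neighbour in `C`, but every vertex of the
boundary of `C` has a neighbour in `P`. -/
structure Guards (G : SimpleGraph V) (P C : Set V) : Prop where
  notMem : ∀ w ∈ C, w ∉ P
  not_adj : ∀ w ∈ C, ∀ x ∈ P, ¬ G.Adj x w
  exists_adj : ∀ s ∈ outerBoundary G C, ∃ x ∈ P, G.Adj x s

namespace Guards

lemma outerBoundary_notMem (h : Guards G P C) {s : V} (hs : s ∈ outerBoundary G C) : s ∉ P :=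
  let ⟨w, hw, hws⟩ := hs.2
  fun hsP => h.not_adj w hw s hsP hws.symm

lemma insert_of_subset_diff (h : Guards G P C) {u : V}
    (hD : D ⊆ C \ (C ∩ insert u (G.neighborSet u)))
    (hN : outerBoundary G D ⊆ outerBoundary G C ∪ C ∩ insert u (G.neighborSet u)) :
    Guards G (insert u P) D := by
  have hDC {w : V} (hw : w ∈ D) : w ∈ C := (hD hw).1
  have hDu {w : V} (hw : w ∈ D) : w ∉ insert u (G.neighborSet u) := fun hwu =>
    (hD hw).2 ⟨hDC hw, hwu⟩
  refine ⟨?_, ?_, ?_⟩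
  · rintro w hw (rfl | hwP)
    · exact hDu hw (Set.mem_insert _ _)
    · exact h.notMem w (hDC hw) hwP
  · rintro w hw x (rfl | hxP)
    · exact fun hxw => hDu hw (Set.mem_insert_of_mem _ hxw)
    · exact h.not_adj w (hDC hw) x hxP
  · intro s hs
    rcases hN hs with hsC | ⟨-, rfl | hus⟩
    · obtain ⟨x, hxP, hxs⟩ := h.exists_adj s hsC
      exact ⟨x, Set.mem_insert_of_mem _ hxP, hxs⟩
    · obtain ⟨-, w, hw, hws⟩ := hs
      exact (hDu hw (Set.mem_insert_of_mem _ hws.symm)).elim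
    · exact ⟨u, Set.mem_insert _ _, hus⟩

lemma exists_private_neighbor {a : V} (h : Guards G (insert a P) C) (hP : ¬ Guards G P C) :
    ∃ s ∈ outerBoundary G C, ∀ x ∈ insert a P, G.Adj x s ↔ x = a := by
  obtain ⟨s, hs, hsP⟩ : ∃ s ∈ outerBoundary G C, ∀ x ∈ P, ¬ G.Adj x s := by
    by_contra! hdom
    exact hP ⟨fun w hw hwP => h.notMem w hw (Set.mem_insert_of_mem _ hwP),
      fun w hw x hxP => h.not_adj w hw x (Set.mem_insert_of_mem _ hxP), hdom⟩
  have has : G.Adj a s := by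
    obtain ⟨x, rfl | hxP, hxs⟩ := h.exists_adj s hs
    · exact hxs
    · exact (hsP x hxP hxs).elim
  refine ⟨s, hs, fun x hx => ⟨fun hxs => hx.resolve_right fun hxP => hsP x hxP hxs, ?_⟩⟩
  rintro rfl
  exact has

end Guards

lemma ncard_biUnion_neighborSet_le [Fintype V] [DecidableRel G.Adj] (P : Set V) :
    (⋃ x ∈ P, G.neighborSet x).ncard ≤ P.ncard * G.maxDegree := by
  classical
  have hcoe : ⋃ x ∈ P, G.neighborSet x = ↑(P.toFinset.biUnion fun x => G.neighborFinset x) := by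
    ext
    simp
  rw [hcoe, Set.ncard_coe_finset, Set.ncard_eq_toFinset_card']
  refine Finset.card_biUnion_le_card_mul _ _ _ fun x _ => ?_
  rw [card_neighborFinset_eq_degree]
  exact G.degree_le_maxDegree x

lemma Guards.ncard_outerBoundary_union_le [Fintype V] [DecidableRel G.Adj]
    (h : Guards G P C) (u : V) :
    (outerBoundary G C ∪ C ∩ insert u (G.neighborSet u)).ncard ≤
      (insert u P).ncard * G.maxDegree + 1 := by
  have hsub : outerBoundary G C ∪ C ∩ insert u (G.neighborSet u) ⊆
      insert u (⋃ x ∈ insert u P, G.neighborSet x) := by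
    rintro s (hs | ⟨-, rfl | hus⟩)
    · obtain ⟨x, hxP, hxs⟩ := h.exists_adj s hs
      exact Or.inr (Set.mem_biUnion (Set.mem_insert_of_mem _ hxP) hxs)
    · exact Set.mem_insert _ _
    · exact Or.inr (Set.mem_biUnion (Set.mem_insert _ _) hus)
  calc (outerBoundary G C ∪ C ∩ insert u (G.neighborSet u)).ncard
      ≤ (insert u (⋃ x ∈ insert u P, G.neighborSet x)).ncard := Set.ncard_le_ncard hsub
    _ ≤ (⋃ x ∈ insert u P, G.neighborSet x).ncard + 1 := Set.ncard_insert_le _ _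
    _ ≤ (insert u P).ncard * G.maxDegree + 1 :=
      Nat.succ_le_succ (ncard_biUnion_neighborSet_le _)

end Guards

section InducedPath

variable {V : Type*} {G : SimpleGraph V}

/-- Deleting the last vertex of a path. -/
def pathGraphCastSucc (k : ℕ) : pathGraph k ↪g pathGraph (k + 1) where
  toEmbedding := Fin.castSuccEmb
  map_rel_iff' := by simp [pathGraph_adj]

/-- Deleting the first vertex of a path. -/
def pathGraphSucc (k : ℕ) : pathGraph k ↪g pathGraph (k + 1) where
  toEmbedding := Fin.succEmb k
  map_rel_iff' := by simp [pathGraph_adj]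

lemma range_eq_insert_last {k : ℕ} (p : pathGraph (k + 1) ↪g G) :
    Set.range p = insert (p (Fin.last k)) (Set.range (p.comp (pathGraphCastSucc k))) :=
  (Fin.range_snoc _ _) ▸ congrArg Set.range (Fin.snoc_init_self p).symm

lemma range_eq_insert_zero {k : ℕ} (p : pathGraph (k + 1) ↪g G) :
    Set.range p = insert (p 0) (Set.range (p.comp (pathGraphSucc k))) :=
  (Fin.range_cons _ _) ▸ congrArg Set.range (Fin.cons_self_tail p).symm

lemma exists_pathGraph_embedding_range_eq_insert {k : ℕ} (p : pathGraph k ↪g G) {u : V}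
    (hu : u ∉ Set.range p) (hadj : ∀ i, G.Adj (p i) u ↔ (i : ℕ) + 1 = k) :
    ∃ q : pathGraph (k + 1) ↪g G, Set.range q = insert u (Set.range p) := by
  refine ⟨⟨⟨Fin.snoc p u, Fin.snoc_injective_iff.2 ⟨p.injective, hu⟩⟩, ?_⟩, Fin.range_snoc _ _⟩
  intro i j
  cases i using Fin.lastCases <;> cases j using Fin.lastCases <;>
    simp only [Function.Embedding.coeFn_mk, Fin.snoc_last, Fin.snoc_castSucc, SimpleGraph.irrefl,
      Embedding.map_adj_iff, G.adj_comm u, hadj, pathGraph_adj, Fin.val_last, Fin.val_castSucc] <;>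
    omega

lemma not_adj_getVert_of_length_eq_dist {a b : V} {w : G.Walk a b} (hw : w.length = G.dist a b)
    {i j : ℕ} (hij : i + 1 < j) (hj : j ≤ w.length) : ¬ G.Adj (w.getVert i) (w.getVert j) := by
  intro hadj
  have hle := dist_le ((w.take i).append (.cons hadj (w.drop j)))
  simp only [Walk.length_append, Walk.length_cons, Walk.take_length, Walk.drop_length] at hle
  omega

lemma exists_pathGraph_embedding_of_reachable {a b : V} (h : G.Reachable a b) :
    ∃ (n : ℕ) (q : pathGraph (n + 1) ↪g G), q 0 = a ∧ q (Fin.last n) = b := by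
  obtain ⟨w, hw⟩ := h.exists_walk_length_eq_dist
  have hpath := w.isPath_of_length_eq_dist hw
  refine ⟨w.length, ⟨⟨fun i => w.getVert i, fun i j hij => Fin.ext <|
    hpath.getVert_injOn i.is_le j.is_le hij⟩, ?_⟩, w.getVert_zero, w.getVert_length⟩
  intro i j
  change G.Adj (w.getVert i) (w.getVert j) ↔ _
  rw [pathGraph_adj]
  refine ⟨fun hadj => ?_, ?_⟩
  · have hne : (i : ℕ) ≠ j := fun hij => hadj.ne (congrArg w.getVert hij)
    have hij : ¬ (i : ℕ) + 1 < j := fun hlt =>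
      not_adj_getVert_of_length_eq_dist hw hlt j.is_le hadj
    have hji : ¬ (j : ℕ) + 1 < i := fun hlt =>
      not_adj_getVert_of_length_eq_dist hw hlt i.is_le hadj.symm
    omega
  · rintro (hij | hji)
    · simpa only [hij] using w.adj_getVert_succ (i := i) (by omega)
    · simpa only [hji] using (w.adj_getVert_succ (i := j) (by omega)).symm

lemma exists_pathGraph_embedding_through {C : Set V} (hC : (G.induce C).Connected) {x y : V}
    (hx : x ∈ outerBoundary G C) (hy : y ∈ outerBoundary G C) :
    ∃ (n : ℕ) (q : pathGraph (n + 1) ↪g G), q 0 = y ∧ q (Fin.last n) = x ∧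
      ∀ i, i ≠ 0 → i ≠ Fin.last n → q i ∈ C := by
  obtain ⟨-, wx, hwx, hwxx⟩ := hx
  obtain ⟨-, wy, hwy, hwyy⟩ := hy
  have hconn : (G.induce (insert x (insert y C))).Connected :=
    connected_induce_insert_of_adj (connected_induce_insert_of_adj hC hwy hwyy)
      (Set.mem_insert_of_mem _ hwx) hwxx
  obtain ⟨n, q, hq0, hqn⟩ := exists_pathGraph_embedding_of_reachable
    (hconn.preconnected ⟨y, by simp⟩ ⟨x, by simp⟩)
  refine ⟨n, (Embedding.induce _).comp q, congrArg Subtype.val hq0, congrArg Subtype.val hqn,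
    fun i hi0 hin => ?_⟩
  rcases (q i).2 with hix | hiy | hiC
  · exact (hin (q.injective (Subtype.ext (hix.trans (congrArg Subtype.val hqn).symm)))).elim
  · exact (hi0 (q.injective (Subtype.ext (hiy.trans (congrArg Subtype.val hq0).symm)))).elim
  · exact hiC

end InducedPath

section LongInducedCycle

variable {V : Type} {G : SimpleGraph V} {C : Set V} {k n : ℕ}

lemma isInducedCycle_append (p : pathGraph (k + 1) ↪g G) (q : pathGraph (n + 1) ↪g G)
    (hne : ∀ i j, p i ≠ q j)
    (hadj : ∀ i j, G.Adj (p i) (q j) ↔ (i = Fin.last k ∧ j = 0) ∨ (i = 0 ∧ j = Fin.last n)) :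
    IsInducedCycle G (Fin.append p q) := by
  have hmod (i : ℕ) (hi : i < k + 1 + (n + 1)) :
      (i + 1) % (k + 1 + (n + 1)) = if i = k + 1 + n then 0 else i + 1 := by
    split_ifs with h
    · rw [h]
      exact Nat.mod_self _
    · exact Nat.mod_eq_of_lt (by omega)
  have hadj' (i j) :
      G.Adj (q j) (p i) ↔ (i = Fin.last k ∧ j = 0) ∨ (i = 0 ∧ j = Fin.last n) := by
    rw [G.adj_comm, hadj]
  refine ⟨Fin.append_injective_iff.2 ⟨p.injective, q.injective, hne⟩, fun i j => ?_⟩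
  rw [hmod i i.2, hmod j j.2]
  cases i using Fin.addCases <;> cases j using Fin.addCases <;>
    simp only [Fin.append_left, Fin.append_right, Embedding.map_adj_iff, pathGraph_adj, hadj, hadj',
      Fin.val_castAdd, Fin.val_natAdd, Fin.ext_iff, Fin.val_last, Fin.val_zero] <;>
    grind

lemma exists_isInducedCycle_of_guards {p : pathGraph (k + 1) ↪g G}
    (hp : Guards G (Set.range p) C) (hC : (G.induce C).Connected) {x y : V}
    (hx : x ∈ outerBoundary G C) (hxp : ∀ i, G.Adj (p i) x ↔ i = 0)
    (hy : y ∈ outerBoundary G C) (hyp : ∀ i, G.Adj (p i) y ↔ i = Fin.last k) :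
    ∃ m ≥ k + 2, ∃ c : Fin m → V, IsInducedCycle G c := by
  obtain ⟨n, q, hq0, hqn, hqC⟩ := exists_pathGraph_embedding_through hC hx hy
  have hcases (j : Fin (n + 1)) : j = 0 ∨ j = Fin.last n ∨ q j ∈ C := by
    grind
  refine ⟨_, by omega, _, isInducedCycle_append p q (fun i j hij => ?_) fun i j => ⟨?_, ?_⟩⟩
  · have hqp : q j ∈ Set.range p := ⟨i, hij⟩
    rcases hcases j with rfl | rfl | hj
    · exact hp.outerBoundary_notMem (hq0 ▸ hy) hqp
    · exact hp.outerBoundary_notMem (hqn ▸ hx) hqp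
    · exact hp.notMem _ hj hqp
  · intro hadj
    rcases hcases j with rfl | rfl | hj
    · exact Or.inl ⟨(hyp i).1 (hq0 ▸ hadj), rfl⟩
    · exact Or.inr ⟨(hxp i).1 (hqn ▸ hadj), rfl⟩
    · exact (hp.not_adj _ hj _ ⟨i, rfl⟩ hadj).elim
  · rintro (⟨rfl, rfl⟩ | ⟨rfl, rfl⟩)
    · exact hq0 ▸ (hyp _).2 rfl
    · exact hqn ▸ (hxp _).2 rfl

end LongInducedCycle

section GuardedByInducedPath

variable {V : Type*} {G : SimpleGraph V} {C : Set V}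

/-- The invariant of the search: the vertex set of some induced path, possibly the empty one,
guards `C`. -/
def GuardedByInducedPath (G : SimpleGraph V) (C : Set V) : Prop :=
  ∃ (m : ℕ) (p : pathGraph m ↪g G), Guards G (Set.range p) C

lemma guardedByInducedPath_of_outerBoundary_eq_empty (hC : outerBoundary G C = ∅) :
    GuardedByInducedPath G C :=
  ⟨0, ⟨.ofIsEmpty, fun {i} => i.elim0⟩, by simp, by simp, by simp [hC]⟩

lemma exists_private_neighbors {k : ℕ} {p : pathGraph (k + 1) ↪g G}
    (hp : Guards G (Set.range p) C) (hmin : ∀ q : pathGraph k ↪g G, ¬ Guards G (Set.range q) C) :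
    (∃ x ∈ outerBoundary G C, ∀ i, G.Adj (p i) x ↔ i = 0) ∧
      ∃ y ∈ outerBoundary G C, ∀ i, G.Adj (p i) y ↔ i = Fin.last k := by
  constructor
  · obtain ⟨x, hx, hadj⟩ := (range_eq_insert_zero p ▸ hp).exists_private_neighbor (hmin _)
    rw [← range_eq_insert_zero] at hadj
    exact ⟨x, hx, fun i => (hadj _ ⟨i, rfl⟩).trans p.injective.eq_iff⟩
  · obtain ⟨y, hy, hadj⟩ := (range_eq_insert_last p ▸ hp).exists_private_neighbor (hmin _)
    rw [← range_eq_insert_last] at hadj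
    exact ⟨y, hy, fun i => (hadj _ ⟨i, rfl⟩).trans p.injective.eq_iff⟩

end GuardedByInducedPath

section CgeFree

variable {V : Type} {G : SimpleGraph V} {C : Set V} {t : ℕ}

lemma exists_short_guard_extension (ht : 0 < t) (hG : CgeFree G t) (hC : (G.induce C).Connected)
    (hguard : GuardedByInducedPath G C) :
    ∃ m < t, ∃ (p : pathGraph m ↪g G) (u : V), Guards G (Set.range p) C ∧
      (C ∩ insert u (G.neighborSet u)).Nonempty ∧ u ∉ Set.range p ∧
      ∀ i, G.Adj (p i) u ↔ (i : ℕ) + 1 = m := by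
  classical
  obtain ⟨p, hp⟩ := Nat.find_spec hguard
  have hmin {k : ℕ} (hk : k < Nat.find hguard) (q : pathGraph k ↪g G) :
      ¬ Guards G (Set.range q) C := fun hq => Nat.find_min hguard hk ⟨q, hq⟩
  generalize Nat.find hguard = m at p hp hmin
  cases m with
  | zero =>
    obtain ⟨u, hu⟩ := hC.nonempty
    exact ⟨0, ht, p, u, hp, ⟨u, hu, Set.mem_insert _ _⟩, hp.notMem u hu, fun i => i.elim0⟩
  | succ k =>
    obtain ⟨⟨x, hx, hxp⟩, y, hy, hyp⟩ := exists_private_neighbors hp (hmin k.lt_succ_self)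
    obtain ⟨n, hn, c, hc⟩ := exists_isInducedCycle_of_guards hp hC hx hxp hy hyp
    have hnt : n < t := not_le.1 fun htn => hG n htn c hc
    obtain ⟨w, hw, hwy⟩ := hy.2
    exact ⟨k + 1, by omega, p, y, hp, ⟨w, hw, Set.mem_insert_of_mem _ hwy.symm⟩,
      hp.outerBoundary_notMem hy, fun i => by rw [hyp, Fin.ext_iff, Fin.val_last]; omega⟩

lemma exists_search_step [Fintype V] [DecidableRel G.Adj] (ht : 0 < t) (hG : CgeFree G t)
    (hC : (G.induce C).Connected) (hguard : GuardedByInducedPath G C) :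
    ∃ X ⊆ C, X.Nonempty ∧ (outerBoundary G C ∪ X).ncard ≤ t * G.maxDegree + 1 ∧
      ∀ D ⊆ C \ X, outerBoundary G D ⊆ outerBoundary G C ∪ X → GuardedByInducedPath G D := by
  obtain ⟨m, hm, p, u, hp, hX, hu, hadj⟩ := exists_short_guard_extension ht hG hC hguard
  obtain ⟨q, hq⟩ := exists_pathGraph_embedding_range_eq_insert p hu hadj
  have hcard : (insert u (Set.range p)).ncard = m + 1 := by
    rw [← hq, ← Set.image_univ, Set.ncard_image_of_injective _ q.injective, Set.ncard_univ,
      Nat.card_fin]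
  refine ⟨C ∩ insert u (G.neighborSet u), Set.inter_subset_left, hX, ?_, fun D hD hN =>
    ⟨m + 1, q, hq ▸ hp.insert_of_subset_diff hD hN⟩⟩
  calc _ ≤ (insert u (Set.range p)).ncard * G.maxDegree + 1 := hp.ncard_outerBoundary_union_le u
    _ ≤ t * G.maxDegree + 1 := by
      rw [hcard]
      gcongr
      exact hm

end CgeFree

/-- for every `t ≥ 4` there is a constant `c_t` such that every
`C_{≥t}`-free graph `G` admits a tree decomposition of width at most `c_t · Δ(G)`,
i.e. has treewidth at most `c_t · Δ(G)`. -/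
theorem stmt6 (t : ℕ) (ht : 4 ≤ t) :
    ∃ c : ℕ, ∀ (V : Type) [Fintype V] (G : SimpleGraph V) [DecidableRel G.Adj],
      CgeFree G t →
      ∃ (n : ℕ) (T : SimpleGraph (Fin n)) (B : Fin n → Finset V),
        T.Connected ∧ T.IsAcyclic ∧
        (∀ v : V, ∃ x, v ∈ B x) ∧
        (∀ u v : V, G.Adj u v → ∃ x, u ∈ B x ∧ v ∈ B x) ∧
        (∀ v : V, (T.induce {x : Fin n | v ∈ B x}).Connected) ∧
        (∀ x, (B x).card ≤ c * G.maxDegree + 1) := by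
  refine ⟨t, fun V _ G _ hG => ?_⟩
  obtain ⟨n, T, B, hTB, hcard⟩ := exists_isTreeDecompositionOn_univ_of_search
    (fun _ _ hN => guardedByInducedPath_of_outerBoundary_eq_empty hN)
    (fun C hC hguard => by
      obtain ⟨X, hXC, hX, hb, hstep⟩ := exists_search_step (by omega) hG hC hguard
      exact ⟨X, hXC, hX, hb, fun D hD _ => hstep D hD⟩)
  lift B to Fin n → Finset V using fun x => (B x).toFinite
  exact ⟨n, T, B, hTB.isTree.connected, hTB.isTree.isAcyclic, fun v => hTB.exists_mem_bag trivial,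
    fun u v => hTB.exists_bag_of_adj u trivial v trivial, fun v => hTB.connected_bags v trivial,
    fun x => Set.ncard_coe_finset (B x) ▸ hcard x⟩

end Paper
end
end

section
/- Let (H,η) be an extended strip decomposition of a graph G and let I be an independent set in G. Then the family A_I of atoms of (H,η) is independent (i.e., pairwise non-conflicting), and I ⊆ ⋃ A_I. -/
noncomputable section

namespace Paper

/-- The vertex sets `A` and `B` are non-adjacent in `G`. -/
def NonAdj {V : Type} (G : SimpleGraph V) (A B : Set V) : Prop :=
  ∀ x ∈ A, ∀ y ∈ B, ¬ G.Adj x y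

/-- `A` intersects or is adjacent to `B` in `G`. -/
def Touches {V : Type} (G : SimpleGraph V) (A B : Set V) : Prop :=
  ∃ x ∈ A, ∃ y ∈ B, x = y ∨ G.Adj x y

/-- `T` is (the vertex set of) a triangle in `H`. -/
def IsTriangle {W : Type} (H : SimpleGraph W) (T : Set W) : Prop :=
  ∃ u v x, H.Adj u v ∧ H.Adj u x ∧ H.Adj v x ∧ T = {u, v, x}

/-- An extended strip decomposition of the graph `G`, with pattern graph `H`.
`vmap u` is `η(u)` for a vertex `u` of `H`, `emap e` is `η(e)` for an edge `e` of `H`,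
`endmap u v` is `η(uv, u)` for an edge `uv` of `H` (with distinguished endpoint `u`),
and `tmap T` is `η(T)` for a triangle `T` of `H`.  (The values of `emap`, `endmap`, `tmap`
on non-edges/non-triangles are irrelevant.) -/
structure ESD {V W : Type} (G : SimpleGraph V) (H : SimpleGraph W) where
  vmap : W → Set V
  emap : Sym2 W → Set V
  endmap : W → W → Set V
  tmap : Set W → Set V
  endmap_subset : ∀ u v, H.Adj u v → endmap u v ⊆ emap s(u, v)
  cover : ∀ x : V, (∃ u, x ∈ vmap u) ∨ (∃ e ∈ H.edgeSet, x ∈ emap e) ∨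
    (∃ T, IsTriangle H T ∧ x ∈ tmap T)
  disj_vv : ∀ u u', u ≠ u' → Disjoint (vmap u) (vmap u')
  disj_ee : ∀ e e', e ∈ H.edgeSet → e' ∈ H.edgeSet → e ≠ e' → Disjoint (emap e) (emap e')
  disj_tt : ∀ T T', IsTriangle H T → IsTriangle H T' → T ≠ T' → Disjoint (tmap T) (tmap T')
  disj_ve : ∀ u e, e ∈ H.edgeSet → Disjoint (vmap u) (emap e)
  disj_vt : ∀ u T, IsTriangle H T → Disjoint (vmap u) (tmap T)
  disj_et : ∀ e T, e ∈ H.edgeSet → IsTriangle H T → Disjoint (emap e) (tmap T)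
  fully_adj : ∀ v u u', H.Adj v u → H.Adj v u' → u ≠ u' →
    ∀ x ∈ endmap v u, ∀ y ∈ endmap v u', G.Adj x y
  edge_cond : ∀ x y, G.Adj x y →
    (∃ u, x ∈ vmap u ∧ y ∈ vmap u) ∨
    (∃ e ∈ H.edgeSet, x ∈ emap e ∧ y ∈ emap e) ∨
    (∃ T, IsTriangle H T ∧ x ∈ tmap T ∧ y ∈ tmap T) ∨
    (∃ v u u', H.Adj v u ∧ H.Adj v u' ∧ u ≠ u' ∧ x ∈ endmap v u ∧ y ∈ endmap v u') ∨
    (∃ v u, H.Adj v u ∧ ((x ∈ vmap v ∧ y ∈ endmap v u) ∨ (y ∈ vmap v ∧ x ∈ endmap v u))) ∨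
    (∃ T u u', IsTriangle H T ∧ u ∈ T ∧ u' ∈ T ∧ H.Adj u u' ∧
      ((x ∈ tmap T ∧ y ∈ endmap u u' ∩ endmap u' u) ∨
       (y ∈ tmap T ∧ x ∈ endmap u u' ∩ endmap u' u)))

/-- Names (labels) for the atoms of an extended strip decomposition with pattern graph on `W`:
`bot e = A_e^⊥`, `half u v = A_{uv}^u`, `full e = A_e^{uv}` for an edge `e = uv`,
`vert u = A_u` for a vertex `u`, and `tri T = A_T` for a triangle `T`. -/
inductive AtomLabel (W : Type) where
  | bot : Sym2 W → AtomLabel W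
  | half : W → W → AtomLabel W
  | full : Sym2 W → AtomLabel W
  | vert : W → AtomLabel W
  | tri : Set W → AtomLabel W

/-- An atom label is valid if the underlying feature is really an edge / a triangle of `H`. -/
def ValidAtom {W : Type} (H : SimpleGraph W) : AtomLabel W → Prop
  | .bot e => e ∈ H.edgeSet
  | .half u v => H.Adj u v
  | .full e => e ∈ H.edgeSet
  | .vert _ => True
  | .tri T => IsTriangle H T

/-- The vertex set of `G` corresponding to an atom label. -/
def ESD.atomSet {V W : Type} {G : SimpleGraph V} {H : SimpleGraph W} (D : ESD G H) :
    AtomLabel W → Set V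
  | .bot e => D.emap e \
      Sym2.lift ⟨fun u v => D.endmap u v ∪ D.endmap v u, fun _ _ => Set.union_comm _ _⟩ e
  | .half u v => D.vmap u ∪ (D.emap s(u, v) \ D.endmap v u)
  | .full e =>
      Sym2.lift ⟨fun u v => D.vmap u ∪ D.vmap v, fun _ _ => Set.union_comm _ _⟩ e ∪
        D.emap e ∪ ⋃ T ∈ {T : Set W | IsTriangle H T ∧ ∀ x ∈ e, x ∈ T}, D.tmap T
  | .vert u => D.vmap u
  | .tri T => D.tmap T

/-- The four atoms associated with the edge `uv` of `H`. -/
def Quad {W : Type} (u v : W) : Set (AtomLabel W) :=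
  {AtomLabel.bot s(u, v), AtomLabel.half u v, AtomLabel.half v u, AtomLabel.full s(u, v)}

/-- Two atom labels are conflicting. -/
def Conflict {W : Type} (H : SimpleGraph W) (a b : AtomLabel W) : Prop :=
  (∃ u v, H.Adj u v ∧ a ≠ b ∧ a ∈ Quad u v ∧ b ∈ Quad u v) ∨
  (∃ u v, H.Adj u v ∧
    (((a = AtomLabel.half u v ∨ a = AtomLabel.full s(u, v)) ∧ b = AtomLabel.vert u) ∨
     ((b = AtomLabel.half u v ∨ b = AtomLabel.full s(u, v)) ∧ a = AtomLabel.vert u))) ∨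
  (∃ u v v', H.Adj u v ∧ H.Adj u v' ∧ v ≠ v' ∧
    (a = AtomLabel.half u v ∨ a = AtomLabel.full s(u, v)) ∧
    (b = AtomLabel.half u v' ∨ b = AtomLabel.full s(u, v'))) ∨
  (∃ u v T, H.Adj u v ∧ IsTriangle H T ∧ u ∈ T ∧ v ∈ T ∧
    ((a = AtomLabel.full s(u, v) ∧ b = AtomLabel.tri T) ∨
     (b = AtomLabel.full s(u, v) ∧ a = AtomLabel.tri T)))

/-- A family of atoms is independent if its members are pairwise non-conflicting. -/
def IndepFamily {W : Type} (H : SimpleGraph W) (𝒜 : Set (AtomLabel W)) : Prop :=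
  ∀ a ∈ 𝒜, ∀ b ∈ 𝒜, ¬ Conflict H a b

/-- The vertex `z` of `G` is peripheral in the extended strip decomposition `D`. -/
def Peripheral {V W : Type} {G : SimpleGraph V} {H : SimpleGraph W} (D : ESD G H)
    (z : V) : Prop :=
  ∃ wz u, H.Adj wz u ∧ (∀ u', H.Adj wz u' → u' = u) ∧ D.endmap wz u = {z}
/-- The family `𝒜_I` of atoms associated with an independent set `I`. -/
def atomFamilyOf {V W : Type} {G : SimpleGraph V} {H : SimpleGraph W} (D : ESD G H)
    (I : Set V) : Set (AtomLabel W) :=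
  {a | (∃ u v, H.Adj u v ∧ (I ∩ D.endmap u v).Nonempty ∧ (I ∩ D.endmap v u).Nonempty ∧
          a = AtomLabel.full s(u, v)) ∨
       (∃ u v, H.Adj u v ∧ (I ∩ D.endmap u v).Nonempty ∧ I ∩ D.endmap v u = ∅ ∧
          a = AtomLabel.half u v) ∨
       (∃ u v, H.Adj u v ∧ I ∩ (D.endmap u v ∪ D.endmap v u) = ∅ ∧
          a = AtomLabel.bot s(u, v)) ∨
       (∃ u, (∀ v, H.Adj u v → I ∩ D.endmap u v = ∅) ∧ a = AtomLabel.vert u) ∨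
       (∃ T, IsTriangle H T ∧
          (∀ u v, u ∈ T → v ∈ T → H.Adj u v → I ∩ D.endmap u v = ∅ ∨ I ∩ D.endmap v u = ∅) ∧
          a = AtomLabel.tri T)}

/-!
What `𝒜_I` selects on an edge `uv` of `H` depends only on which of `η(uv,u)` and `η(uv,v)` the set
`I` meets: exactly one of the four atoms of `uv` is chosen, and it contains `I ∩ η(uv)`. For
distinct edges `vu`, `vw` the sets `η(vu,v)` and `η(vw,v)` are fully adjacent, so an independent set
meets at most one of the sets `η(e,v)` at each vertex `v`; this rules out conflicts between atoms of
different edges. A set `η(v)` or `η(T)` whose own atom is not chosen lies in the chosen atom of an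
edge that prevented this choice.
-/

section atomFamily

variable {V W : Type} {G : SimpleGraph V} {H : SimpleGraph W} {D : ESD G H} {I : Set V}
  {u v w : W} {T : Set W} {a : AtomLabel W}

/-- The set `I` meets `η(uv, u)`, the end at `u` of the edge `uv`. -/
def ESD.MeetsEnd (D : ESD G H) (I : Set V) (u v : W) : Prop :=
  (I ∩ D.endmap u v).Nonempty

theorem ESD.not_meetsEnd_iff : ¬ D.MeetsEnd I u v ↔ I ∩ D.endmap u v = ∅ :=
  Set.not_nonempty_iff_eq_empty

theorem ESD.MeetsEnd.eq_of_isIndepSet (hI : G.IsIndepSet I) (huv : H.Adj u v) (huw : H.Adj u w)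
    (hv : D.MeetsEnd I u v) (hw : D.MeetsEnd I u w) : v = w := by
  obtain ⟨x, hxI, hx⟩ := hv
  obtain ⟨y, hyI, hy⟩ := hw
  by_contra hvw
  have hxy : G.Adj x y := D.fully_adj u v w huv huw hvw x hx y hy
  exact hI hxI hyI hxy.ne hxy

theorem full_mem_atomFamilyOf_iff :
    .full s(u, v) ∈ atomFamilyOf D I ↔ H.Adj u v ∧ D.MeetsEnd I u v ∧ D.MeetsEnd I v u := by
  simp only [atomFamilyOf, ESD.MeetsEnd, Set.mem_ofPred_eq]
  grind [H.adj_comm]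

theorem half_mem_atomFamilyOf_iff :
    .half u v ∈ atomFamilyOf D I ↔ H.Adj u v ∧ D.MeetsEnd I u v ∧ ¬ D.MeetsEnd I v u := by
  simp [atomFamilyOf, ESD.MeetsEnd, Set.not_nonempty_iff_eq_empty]

theorem bot_mem_atomFamilyOf_iff :
    .bot s(u, v) ∈ atomFamilyOf D I ↔ H.Adj u v ∧ ¬ D.MeetsEnd I u v ∧ ¬ D.MeetsEnd I v u := by
  simp only [atomFamilyOf, ESD.not_meetsEnd_iff, Set.mem_ofPred_eq, Set.inter_union_distrib_left,
    Set.union_empty_iff]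
  grind [H.adj_comm]

theorem vert_mem_atomFamilyOf_iff :
    .vert u ∈ atomFamilyOf D I ↔ ∀ v, H.Adj u v → ¬ D.MeetsEnd I u v := by
  simp [atomFamilyOf, ESD.not_meetsEnd_iff]

theorem tri_mem_atomFamilyOf_iff :
    .tri T ∈ atomFamilyOf D I ↔ IsTriangle H T ∧
      ∀ u v, u ∈ T → v ∈ T → H.Adj u v → ¬ (D.MeetsEnd I u v ∧ D.MeetsEnd I v u) := by
  simp [atomFamilyOf, not_and_or, ESD.not_meetsEnd_iff, -not_and]

open Classical in
/-- The one of the four atoms of the edge `uv` that belongs to `𝒜_I`, read off from the ends of `uv`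
that `I` meets. -/
def edgeAtom (D : ESD G H) (I : Set V) (u v : W) : AtomLabel W :=
  if D.MeetsEnd I u v then
    if D.MeetsEnd I v u then .full s(u, v) else .half u v
  else
    if D.MeetsEnd I v u then .half v u else .bot s(u, v)

theorem edgeAtom_mem_atomFamilyOf (huv : H.Adj u v) : edgeAtom D I u v ∈ atomFamilyOf D I := by
  unfold edgeAtom
  split_ifs with hu hv hv
  · exact full_mem_atomFamilyOf_iff.2 ⟨huv, hu, hv⟩
  · exact half_mem_atomFamilyOf_iff.2 ⟨huv, hu, hv⟩
  · exact half_mem_atomFamilyOf_iff.2 ⟨huv.symm, hv, hu⟩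
  · exact bot_mem_atomFamilyOf_iff.2 ⟨huv, hu, hv⟩

theorem eq_edgeAtom_of_mem_quad (hQuad : a ∈ Quad u v) (ha : a ∈ atomFamilyOf D I) :
    a = edgeAtom D I u v := by
  rcases hQuad with rfl | rfl | rfl | rfl
  · obtain ⟨-, hu, hv⟩ := bot_mem_atomFamilyOf_iff.1 ha
    simp [edgeAtom, hu, hv]
  · obtain ⟨-, hu, hv⟩ := half_mem_atomFamilyOf_iff.1 ha
    simp [edgeAtom, hu, hv]
  · obtain ⟨-, hv, hu⟩ := half_mem_atomFamilyOf_iff.1 ha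
    simp [edgeAtom, hu, hv]
  · obtain ⟨-, hu, hv⟩ := full_mem_atomFamilyOf_iff.1 ha
    simp [edgeAtom, hu, hv]

theorem meetsEnd_of_half_or_full_mem (ha : a ∈ atomFamilyOf D I)
    (h : a = .half u v ∨ a = .full s(u, v)) : D.MeetsEnd I u v := by
  rcases h with rfl | rfl
  · exact (half_mem_atomFamilyOf_iff.1 ha).2.1
  · exact (full_mem_atomFamilyOf_iff.1 ha).2.1

theorem vert_notMem_of_half_or_full_mem (huv : H.Adj u v) (ha : a ∈ atomFamilyOf D I)
    (h : a = .half u v ∨ a = .full s(u, v)) : .vert u ∉ atomFamilyOf D I := fun hvert =>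
  vert_mem_atomFamilyOf_iff.1 hvert v huv (meetsEnd_of_half_or_full_mem ha h)

theorem tri_notMem_of_full_mem (hu : u ∈ T) (hv : v ∈ T)
    (hfull : .full s(u, v) ∈ atomFamilyOf D I) : .tri T ∉ atomFamilyOf D I := fun htri =>
  have ⟨huv, hmeets⟩ := full_mem_atomFamilyOf_iff.1 hfull
  (tri_mem_atomFamilyOf_iff.1 htri).2 u v hu hv huv hmeets

theorem indepFamily_atomFamilyOf (hI : G.IsIndepSet I) : IndepFamily H (atomFamilyOf D I) := by
  rintro a ha b hb (⟨u, v, -, hab, hau, hbu⟩ | ⟨u, v, huv, ⟨h, rfl⟩ | ⟨h, rfl⟩⟩ |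
    ⟨u, v, w, huv, huw, hvw, hav, hbw⟩ | ⟨u, v, T, -, -, hu, hv, ⟨rfl, rfl⟩ | ⟨rfl, rfl⟩⟩)
  · exact hab ((eq_edgeAtom_of_mem_quad hau ha).trans (eq_edgeAtom_of_mem_quad hbu hb).symm)
  · exact vert_notMem_of_half_or_full_mem huv ha h hb
  · exact vert_notMem_of_half_or_full_mem huv hb h ha
  · exact hvw <| ESD.MeetsEnd.eq_of_isIndepSet hI huv huw
      (meetsEnd_of_half_or_full_mem ha hav) (meetsEnd_of_half_or_full_mem hb hbw)
  · exact tri_notMem_of_full_mem hu hv ha hb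
  · exact tri_notMem_of_full_mem hu hv hb ha

theorem vmap_subset_atomSet_edgeAtom (hu : D.MeetsEnd I u v) :
    D.vmap u ⊆ D.atomSet (edgeAtom D I u v) := by
  intro x hx
  by_cases hv : D.MeetsEnd I v u <;> simp [edgeAtom, hu, hv, ESD.atomSet, hx]

theorem inter_emap_subset_atomSet_edgeAtom :
    I ∩ D.emap s(u, v) ⊆ D.atomSet (edgeAtom D I u v) := by
  rintro x ⟨hxI, hx⟩
  have notMem_endmap {u v : W} (h : ¬ D.MeetsEnd I u v) : x ∉ D.endmap u v :=
    fun hxu => h ⟨x, hxI, hxu⟩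
  unfold edgeAtom
  split_ifs with hu hv hv
  · exact .inl (.inr hx)
  · exact .inr ⟨hx, notMem_endmap hv⟩
  · exact .inr ⟨Sym2.eq_swap ▸ hx, notMem_endmap hu⟩
  · exact ⟨hx, not_or.2 ⟨notMem_endmap hu, notMem_endmap hv⟩⟩

theorem tmap_subset_atomSet_full (hT : IsTriangle H T) (hu : u ∈ T) (hv : v ∈ T) :
    D.tmap T ⊆ D.atomSet (.full s(u, v)) := by
  have mem_of_mem_edge : ∀ x ∈ s(u, v), x ∈ T := Sym2.ball.2 ⟨hu, hv⟩
  exact fun _ hx => .inr (Set.mem_biUnion ⟨hT, mem_of_mem_edge⟩ hx)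

variable (D I)

theorem vmap_subset_biUnion_atomSet (u : W) :
    D.vmap u ⊆ ⋃ a ∈ atomFamilyOf D I, D.atomSet a := by
  by_cases hvert : .vert u ∈ atomFamilyOf D I
  · exact Set.subset_biUnion_of_mem (u := D.atomSet) hvert
  · obtain ⟨v, huv, hu⟩ : ∃ v, H.Adj u v ∧ D.MeetsEnd I u v := by
      simpa only [vert_mem_atomFamilyOf_iff, not_forall, not_not, exists_prop] using hvert
    exact (vmap_subset_atomSet_edgeAtom hu).trans
      (Set.subset_biUnion_of_mem (edgeAtom_mem_atomFamilyOf huv))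

theorem inter_emap_subset_biUnion_atomSet {e : Sym2 W} (he : e ∈ H.edgeSet) :
    I ∩ D.emap e ⊆ ⋃ a ∈ atomFamilyOf D I, D.atomSet a := by
  induction e with
  | _ u v =>
    exact inter_emap_subset_atomSet_edgeAtom.trans
      (Set.subset_biUnion_of_mem (edgeAtom_mem_atomFamilyOf he))

theorem tmap_subset_biUnion_atomSet (hT : IsTriangle H T) :
    D.tmap T ⊆ ⋃ a ∈ atomFamilyOf D I, D.atomSet a := by
  by_cases htri : .tri T ∈ atomFamilyOf D I
  · exact Set.subset_biUnion_of_mem (u := D.atomSet) htri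
  · obtain ⟨u, v, hu, hv, huv, hmeets⟩ : ∃ u v, u ∈ T ∧ v ∈ T ∧ H.Adj u v ∧
        D.MeetsEnd I u v ∧ D.MeetsEnd I v u := by
      simpa only [tri_mem_atomFamilyOf_iff, hT, true_and, not_forall, not_not, exists_prop]
        using htri
    exact (tmap_subset_atomSet_full hT hu hv).trans
      (Set.subset_biUnion_of_mem (full_mem_atomFamilyOf_iff.2 ⟨huv, hmeets⟩))

theorem subset_biUnion_atomSet : I ⊆ ⋃ a ∈ atomFamilyOf D I, D.atomSet a := by
  intro x hxI
  rcases D.cover x with ⟨u, hx⟩ | ⟨e, he, hx⟩ | ⟨T, hT, hx⟩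
  · exact vmap_subset_biUnion_atomSet D I u hx
  · exact inter_emap_subset_biUnion_atomSet D I he ⟨hxI, hx⟩
  · exact tmap_subset_biUnion_atomSet D I hT hx

end atomFamily

/-- for every independent set `I` in `G`, the family `𝒜_I` of atoms of an
extended strip decomposition `(H, η)` of `G` is independent, and `I ⊆ ⋃ 𝒜_I`. -/
theorem stmt7 {V W : Type} (G : SimpleGraph V) (H : SimpleGraph W) (D : ESD G H)
    (I : Set V) (hI : ∀ x ∈ I, ∀ y ∈ I, ¬ G.Adj x y) :
    IndepFamily H (atomFamilyOf D I) ∧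
      ∀ x ∈ I, ∃ a ∈ atomFamilyOf D I, x ∈ D.atomSet a := by
  have hIndep : G.IsIndepSet I := fun x hx y hy _ => hI x hx y hy
  refine ⟨indepFamily_atomFamilyOf hIndep, fun x hx => ?_⟩
  simpa only [Set.mem_iUnion, exists_prop] using subset_biUnion_atomSet D I hx

end Paper
end
end

section
/- Let G be a graph with weight function w, let (H,η) be an extended strip decomposition of G, and for every atom A of (H,η) let I(A) ⊆ A be given; let H', w', and a be as defined. If A is an independent family of atoms of (H,η), then M(A) is a matching in H' and w'(M(A)) ≥ −a + Σ_{A ∈ A} w(I(A)). -/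
noncomputable section

namespace Paper

/-- Names for the edges of the graph `H'` obtained from `H` by adding, for every edge
`e` of `H`, a new vertex `x_e` adjacent to both endpoints of `e`:
`Sum.inl e` is the original edge `e` of `H`, and `Sum.inr (e, u)` is the edge `x_e u`. -/
abbrev EdgeName (W : Type) := Sym2 W ⊕ Sym2 W × W

/-- The graph `H'` obtained from `H` by adding, for every edge `e = uv` of `H`, a new
vertex `x_e` (represented by `Sum.inr e`) adjacent exactly to `u` and `v`. -/
def Hprime {W : Type} (H : SimpleGraph W) : SimpleGraph (W ⊕ Sym2 W) :=
  SimpleGraph.fromRel (fun a b =>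
    match a, b with
    | Sum.inl u, Sum.inl v => H.Adj u v
    | Sum.inl u, Sum.inr e => e ∈ H.edgeSet ∧ u ∈ e
    | _, _ => False)

/-- The unordered pair of vertices of `H'` corresponding to an edge name. -/
def enameToSym {W : Type} : EdgeName W → Sym2 (W ⊕ Sym2 W)
  | Sum.inl e => Sym2.map Sum.inl e
  | Sum.inr (e, u) => s(Sum.inr e, Sum.inl u)

/-- `M` (a set of edge names) is a matching in the graph `H'`: all its members are edges of
`H'`, and distinct members share no endpoint. -/
def IsMatchingIn {W : Type} (H : SimpleGraph W) (M : Set (EdgeName W)) : Prop :=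
  (∀ m ∈ M, enameToSym m ∈ (Hprime H).edgeSet) ∧
  ∀ m ∈ M, ∀ m' ∈ M, m ≠ m' → ∀ x, x ∈ enameToSym m → x ∉ enameToSym m'

/-- `w(I(A))` as an integer, for the chosen independent sets `Ifun`. -/
def wIat {V W : Type} (w : V → ℕ) (Ifun : AtomLabel W → Set V) (a : AtomLabel W) : ℤ :=
  (wsum w (Ifun a) : ℤ)

open scoped Classical in
/-- `f(A_e^u)`, expressed as a function of the endpoint `u` and the unordered edge `e`. -/
def halfW {W : Type} (f : AtomLabel W → ℤ) (u : W) (e : Sym2 W) : ℤ :=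
  Sym2.lift ⟨fun a b =>
    if a = u then f (AtomLabel.half u b) else if b = u then f (AtomLabel.half u a) else 0,
    by intro a b; by_cases ha : a = u <;> by_cases hb : b = u <;> simp [ha, hb]⟩ e

/-- `Σ_{T ∈ 𝒯(e)} f(A_T)`, the sum over all triangles of `H` containing the edge `e`. -/
def triSumW {W : Type} (H : SimpleGraph W) (f : AtomLabel W → ℤ) (e : Sym2 W) : ℤ :=
  ∑ᶠ T ∈ {T : Set W | IsTriangle H T ∧ ∀ x ∈ e, x ∈ T}, f (AtomLabel.tri T)

/-- `f(A_u) + f(A_v)` for the two endpoints `u`, `v` of the edge `e`. -/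
def vertW {W : Type} (f : AtomLabel W → ℤ) (e : Sym2 W) : ℤ :=
  Sym2.lift ⟨fun u v => f (AtomLabel.vert u) + f (AtomLabel.vert v),
    fun _ _ => add_comm _ _⟩ e

/-- The edge-weight function `w'` on the edges of `H'`:
`w'(e) = f(A_e^{uv}) - f(A_u) - f(A_v) - f(A_e^⊥) - Σ_{T ∈ 𝒯(e)} f(A_T)` and
`w'(x_e u) = f(A_e^u) - f(A_u) - f(A_e^⊥)`, where `f(A) = w(I(A))`. -/
def wPrime {W : Type} (H : SimpleGraph W) (f : AtomLabel W → ℤ) : EdgeName W → ℤ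
  | Sum.inl e => f (AtomLabel.full e) - vertW f e - f (AtomLabel.bot e) - triSumW H f e
  | Sum.inr (e, u) => halfW f u e - f (AtomLabel.vert u) - f (AtomLabel.bot e)

/-- The constant `a = Σ_{v ∈ V(H)} w(I(A_v)) + Σ_{e ∈ E(H)} w(I(A_e^⊥)) + Σ_T w(I(A_T))`. -/
def aConst {W : Type} (H : SimpleGraph W) (f : AtomLabel W → ℤ) : ℤ :=
  (∑ᶠ u : W, f (AtomLabel.vert u)) + (∑ᶠ e ∈ H.edgeSet, f (AtomLabel.bot e)) +
    ∑ᶠ T ∈ {T : Set W | IsTriangle H T}, f (AtomLabel.tri T)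

/-- The set `M(𝒜)` of edges of `H'` associated with a family `𝒜` of atoms:
the edge `e` for each `A_e^{uv} ∈ 𝒜`, and the edge `x_e u` for each `A_e^u ∈ 𝒜`. -/
def matchOf {W : Type} (𝒜 : Set (AtomLabel W)) : Set (EdgeName W) :=
  {m | (∃ e, AtomLabel.full e ∈ 𝒜 ∧ m = Sum.inl e) ∨
       (∃ u v, AtomLabel.half u v ∈ 𝒜 ∧ m = Sum.inr (s(u, v), u))}

/-!
Every atom `A` is made of elementary atoms (those of the form `A_v`, `A_e^⊥`, `A_T`), its *parts*.
The weight `w'` is chosen so that `f(A)` is the sum of `f` over the parts of `A`, plus `w'(m)` if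
`A` contributes an edge `m` to `M(𝒜)`. Two distinct atoms with a common part are in conflict: a
common triangle reduces to a common vertex, since any two edges of a triangle meet. Hence the parts
of the members of an independent family are pairwise disjoint, and their total weight is at most
`a`. The endpoints of `m` in `H'` correspond to parts of `A` (`v` to `A_v`, `x_e` to `A_e^⊥`), so
the same disjointness shows that `M(𝒜)` is a matching.
-/

theorem finsum_mem_filterMap {α β M : Type*} [AddCommMonoid M] {g : α → Option β}
    (g_inj : ∀ a a' b, b ∈ g a → b ∈ g a' → a = a') (φ : β → M) (s : Set α) :
    ∑ᶠ b ∈ {b | ∃ a ∈ s, b ∈ g a}, φ b = ∑ᶠ a ∈ s, (g a).elim 0 φ := by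
  have injOn_support : (s ∩ Function.support ((Option.elim · 0 φ) ∘ g)).InjOn g := by
    rintro a ⟨-, ha⟩ a' - h
    cases hb : g a with
    | none => simp [hb] at ha
    | some b => exact g_inj a a' b hb (h ▸ hb)
  calc ∑ᶠ b ∈ {b | ∃ a ∈ s, b ∈ g a}, φ b
      = ∑ᶠ o ∈ some '' {b | ∃ a ∈ s, b ∈ g a}, o.elim 0 φ :=
        (finsum_mem_image (Option.some_injective β).injOn (f := (Option.elim · 0 φ))).symm
    _ = ∑ᶠ o ∈ g '' s, o.elim 0 φ :=
        finsum_mem_inter_support_eq' _ _ _ fun o ho ↦ by cases o <;> simp_all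
    _ = ∑ᶠ a ∈ s, (g a).elim 0 φ := finsum_mem_image' injOn_support

theorem finsum_mem_le_finsum_mem_of_subset {α M : Type*} [AddCommMonoid M] [PartialOrder M]
    [IsOrderedAddMonoid M] {f : α → M} {s t : Set α} (ht : t.Finite) (hst : s ⊆ t)
    (hf : ∀ a ∈ t, 0 ≤ f a) : ∑ᶠ a ∈ s, f a ≤ ∑ᶠ a ∈ t, f a := by
  rw [← finsum_mem_add_sdiff hst ht]
  exact le_add_of_nonneg_right <| finsum_nonneg fun a ↦ finsum_nonneg fun ha ↦ hf a ha.1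

variable {W : Type} {H : SimpleGraph W}

theorem IsTriangle.exists_mem_mem_of_subset {T : Set W} (hT : IsTriangle H T) {e e' : Sym2 W}
    (he : ¬ e.IsDiag) (he' : ¬ e'.IsDiag) (heT : ∀ x ∈ e, x ∈ T) (heT' : ∀ x ∈ e', x ∈ T) :
    ∃ u, u ∈ e ∧ u ∈ e' := by
  obtain ⟨x, y, z, -, -, -, rfl⟩ := hT
  induction e with | _ a b
  induction e' with | _ c d
  by_contra! hdisj
  have ha : a ∉ s(c, d) := hdisj a (by simp)
  have hb : b ∉ s(c, d) := hdisj b (by simp)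
  simp only [Sym2.mk_isDiag_iff, Sym2.mem_iff, forall_eq_or_imp, forall_eq,
    Set.mem_insert_iff, Set.mem_singleton_iff] at he he' heT heT' ha hb
  grind

theorem Conflict.symm {A B : AtomLabel W} (h : Conflict H A B) : Conflict H B A := by
  rcases h with ⟨u, v, huv, hne, hA, hB⟩ | ⟨u, v, huv, h⟩ | ⟨u, v, v', huv, huv', hne, hA, hB⟩ |
    ⟨u, v, T, huv, hT, hu, hv, h⟩
  · exact Or.inl ⟨u, v, huv, hne.symm, hB, hA⟩
  · exact Or.inr <| Or.inl ⟨u, v, huv, h.symm⟩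
  · exact Or.inr <| Or.inr <| Or.inl ⟨u, v', v, huv', huv, hne.symm, hB, hA⟩
  · exact Or.inr <| Or.inr <| Or.inr ⟨u, v, T, huv, hT, hu, hv, h.symm⟩

namespace AtomLabel

instance [Finite W] : Finite (AtomLabel W) := by
  have : Finite (Sym2 W) := Quot.finite _
  refine Finite.of_surjective (Sum.elim bot <| Sum.elim (Function.uncurry half) <|
    Sum.elim full <| Sum.elim vert tri) ?_
  rintro (e | ⟨u, v⟩ | e | u | T) <;> simp

variable (H) in
/-- The elementary atoms of `H`: those of the form `A_v`, `A_e^⊥` or `A_T`. The constant `a` is the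
sum of their weights. -/
def elementary : Set (AtomLabel W) :=
  Set.range vert ∪ bot '' H.edgeSet ∪ tri '' {T | IsTriangle H T}

variable (H) in
/-- The elementary atoms whose weights `w'` subtracts from the weight of the given atom. An
elementary atom is its own only part. -/
def parts : AtomLabel W → Set (AtomLabel W)
  | bot e => {bot e}
  | half u v => {vert u, bot s(u, v)}
  | full e => vert '' {u | u ∈ e} ∪ {bot e} ∪ tri '' {T | IsTriangle H T ∧ ∀ x ∈ e, x ∈ T}
  | vert u => {vert u}
  | tri T => {tri T}

/-- The edge of `H'` that an atom contributes to `M(𝒜)`: the edge `e` for `A_e^{uv}`, the edge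
`x_e u` for `A_e^u`, and none for an elementary atom. -/
def edgeName : AtomLabel W → Option (EdgeName W)
  | half u v => some (Sum.inr (s(u, v), u))
  | full e => some (Sum.inl e)
  | _ => none

theorem edgeName_inj (A B : AtomLabel W) (m : EdgeName W) (hA : m ∈ A.edgeName)
    (hB : m ∈ B.edgeName) : A = B := by
  cases A <;> cases B <;> simp_all [edgeName] <;> grind

theorem matchOf_eq (𝒜 : Set (AtomLabel W)) : matchOf 𝒜 = {m | ∃ A ∈ 𝒜, m ∈ A.edgeName} := by
  ext m
  constructor
  · rintro (⟨e, he, rfl⟩ | ⟨u, v, huv, rfl⟩)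
    · exact ⟨full e, he, rfl⟩
    · exact ⟨half u v, huv, rfl⟩
  · rintro ⟨_ | ⟨u, v⟩ | e | _ | _, hA, hm⟩ <;> cases hm
    · exact Or.inr ⟨u, v, hA, rfl⟩
    · exact Or.inl ⟨e, hA, rfl⟩

theorem enameToSym_mem_edgeSet {A : AtomLabel W} (hA : ValidAtom H A) {m : EdgeName W}
    (hm : m ∈ A.edgeName) : enameToSym m ∈ (Hprime H).edgeSet := by
  rcases A with _ | ⟨u, v⟩ | e | _ | _ <;> cases hm
  · have huv : H.Adj u v := hA
    simp [enameToSym, Hprime, huv]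
  · induction e with | _ u v
    have huv : H.Adj u v := hA
    simp [enameToSym, Hprime, huv, huv.ne]

variable (H) in
theorem elim_vert_bot_mem_parts {A : AtomLabel W} {m : EdgeName W} (hm : m ∈ A.edgeName)
    {x : W ⊕ Sym2 W} (hx : x ∈ enameToSym m) : Sum.elim vert bot x ∈ A.parts H := by
  rcases A with _ | ⟨u, v⟩ | e | _ | _ <;> cases hm
  · rcases Sym2.mem_iff.1 hx with rfl | rfl <;> simp [parts]
  · obtain ⟨u, hu, rfl⟩ := Sym2.mem_map.1 hx
    simp [parts, hu]

section parts

variable {A B : AtomLabel W}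

theorem vert_mem_parts {u : W} :
    vert u ∈ A.parts H ↔ A = vert u ∨ ∃ v, A = half u v ∨ A = full s(u, v) := by
  cases A <;> simp [parts, Sym2.mem_iff_exists, eq_comm]

theorem bot_mem_parts {u v : W} : bot s(u, v) ∈ A.parts H ↔ A ∈ Quad u v := by
  cases A <;> simp [parts, Quad, eq_comm, and_comm]

theorem tri_mem_parts {T : Set W} :
    tri T ∈ A.parts H ↔
      A = tri T ∨ ∃ e, A = full e ∧ IsTriangle H T ∧ ∀ x ∈ e, x ∈ T := by
  cases A <;> simp [parts, eq_comm]

theorem parts_subset_elementary (hA : ValidAtom H A) : A.parts H ⊆ elementary H := by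
  intro b hb
  cases A <;> cases b <;> simp_all [parts, elementary, ValidAtom]

theorem adj_of_eq_half_or_full (hA : ValidAtom H A) {u v : W}
    (h : A = half u v ∨ A = full s(u, v)) : H.Adj u v := by
  rcases h with rfl | rfl <;> exact hA

theorem conflict_of_bot_mem_parts (hA : ValidAtom H A) (hAB : A ≠ B) {e : Sym2 W}
    (he : bot e ∈ A.parts H) (he' : bot e ∈ B.parts H) : Conflict H A B := by
  have hedge : e ∈ H.edgeSet := by simpa [elementary] using parts_subset_elementary hA he
  induction e with | _ u v
  exact Or.inl ⟨u, v, hedge, hAB, bot_mem_parts.1 he, bot_mem_parts.1 he'⟩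

theorem conflict_of_vert_mem_parts (hA : ValidAtom H A) (hB : ValidAtom H B) (hAB : A ≠ B) {u : W}
    (hu : vert u ∈ A.parts H) (hu' : vert u ∈ B.parts H) : Conflict H A B := by
  rcases vert_mem_parts.1 hu with rfl | ⟨v, hv⟩ <;>
    rcases vert_mem_parts.1 hu' with rfl | ⟨v', hv'⟩
  · exact absurd rfl hAB
  · exact Or.inr <| Or.inl ⟨u, v', adj_of_eq_half_or_full hB hv', Or.inr ⟨hv', rfl⟩⟩
  · exact Or.inr <| Or.inl ⟨u, v, adj_of_eq_half_or_full hA hv, Or.inl ⟨hv, rfl⟩⟩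
  · have huv := adj_of_eq_half_or_full hA hv
    have huv' := adj_of_eq_half_or_full hB hv'
    by_cases hvv' : v = v'
    · subst hvv'
      refine Or.inl ⟨u, v, huv, hAB, ?_, ?_⟩
      · rcases hv with rfl | rfl <;> simp [Quad]
      · rcases hv' with rfl | rfl <;> simp [Quad]
    · exact Or.inr <| Or.inr <| Or.inl ⟨u, v, v', huv, huv', hvv', hv, hv'⟩

theorem conflict_full_tri {e : Sym2 W} {T : Set W} (he : e ∈ H.edgeSet) (hT : IsTriangle H T)
    (heT : ∀ x ∈ e, x ∈ T) : Conflict H (full e) (tri T) := by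
  induction e with | _ u v
  exact Or.inr <| Or.inr <| Or.inr
    ⟨u, v, T, he, hT, heT u (by simp), heT v (by simp), Or.inl ⟨rfl, rfl⟩⟩

theorem conflict_of_tri_mem_parts (hA : ValidAtom H A) (hB : ValidAtom H B) (hAB : A ≠ B)
    {T : Set W} (hT : tri T ∈ A.parts H) (hT' : tri T ∈ B.parts H) : Conflict H A B := by
  rcases tri_mem_parts.1 hT with rfl | ⟨e, rfl, htri, heT⟩ <;>
    rcases tri_mem_parts.1 hT' with rfl | ⟨e', rfl, htri', heT'⟩
  · exact absurd rfl hAB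
  · exact (conflict_full_tri hB htri' heT').symm
  · exact conflict_full_tri hA htri heT
  · obtain ⟨u, hu, hu'⟩ := htri.exists_mem_mem_of_subset (H.not_isDiag_of_mem_edgeSet hA)
      (H.not_isDiag_of_mem_edgeSet hB) heT heT'
    exact conflict_of_vert_mem_parts hA hB hAB (u := u) (by simp [parts, hu]) (by simp [parts, hu'])

theorem conflict_of_mem_parts (hA : ValidAtom H A) (hB : ValidAtom H B) (hAB : A ≠ B)
    {b : AtomLabel W} (hbA : b ∈ A.parts H) (hbB : b ∈ B.parts H) : Conflict H A B := by
  rcases parts_subset_elementary hA hbA with (⟨u, rfl⟩ | ⟨e, -, rfl⟩) | ⟨T, -, rfl⟩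
  · exact conflict_of_vert_mem_parts hA hB hAB hbA hbB
  · exact conflict_of_bot_mem_parts hA hAB hbA hbB
  · exact conflict_of_tri_mem_parts hA hB hAB hbA hbB

end parts

section weights

theorem finsum_mem_endpoints (f : AtomLabel W → ℤ) {e : Sym2 W} (he : ¬ e.IsDiag) :
    ∑ᶠ u ∈ {u | u ∈ e}, f (vert u) = vertW f e := by
  induction e with | _ u v
  have endpoints : {x | x ∈ s(u, v)} = {u, v} := by ext; simp
  rw [endpoints, finsum_mem_pair (by simpa using he)]
  rfl

variable [Finite W] (f : AtomLabel W → ℤ)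

variable (H) in
theorem finsum_mem_elementary : ∑ᶠ b ∈ elementary H, f b = aConst H f := by
  rw [elementary, finsum_mem_union (by simp [Set.disjoint_right]) (Set.toFinite _) (Set.toFinite _),
    finsum_mem_union (by simp [Set.disjoint_left]) (Set.toFinite _) (Set.toFinite _),
    finsum_mem_range fun _ _ ↦ vert.inj, finsum_mem_image fun _ _ _ _ ↦ bot.inj,
    finsum_mem_image fun _ _ _ _ ↦ tri.inj, aConst]

theorem finsum_mem_parts_full {e : Sym2 W} (he : ¬ e.IsDiag) :
    ∑ᶠ b ∈ (full e).parts H, f b = vertW f e + f (bot e) + triSumW H f e := by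
  rw [parts, finsum_mem_union (by simp [Set.disjoint_left]) (Set.toFinite _) (Set.toFinite _),
    finsum_mem_union (by simp) (Set.toFinite _) (Set.toFinite _),
    finsum_mem_image fun _ _ _ _ ↦ vert.inj, finsum_mem_image fun _ _ _ _ ↦ tri.inj,
    finsum_mem_singleton, finsum_mem_endpoints f he, triSumW]

theorem weight_eq_wPrime_add_finsum_parts {A : AtomLabel W} (hA : ValidAtom H A) :
    f A = A.edgeName.elim 0 (wPrime H f) + ∑ᶠ b ∈ A.parts H, f b := by
  rcases A with e | ⟨u, v⟩ | e | u | T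
  case half =>
    rw [parts, finsum_mem_pair (by simp)]
    simp [edgeName, wPrime, halfW]
  case full =>
    rw [finsum_mem_parts_full f (H.not_isDiag_of_mem_edgeSet hA)]
    simp only [edgeName, wPrime, Option.elim]
    ring
  all_goals simp [edgeName, parts]

end weights

end AtomLabel

open AtomLabel

variable {𝒜 : Set (AtomLabel W)}

theorem IndepFamily.pairwiseDisjoint_parts (hvalid : ∀ A ∈ 𝒜, ValidAtom H A)
    (hindep : IndepFamily H 𝒜) : 𝒜.PairwiseDisjoint (parts H) :=
  fun A hA B hB hAB ↦ Set.disjoint_left.2 fun _ hbA hbB ↦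
    hindep A hA B hB <| conflict_of_mem_parts (hvalid A hA) (hvalid B hB) hAB hbA hbB

theorem IndepFamily.isMatchingIn_matchOf (hvalid : ∀ A ∈ 𝒜, ValidAtom H A)
    (hindep : IndepFamily H 𝒜) : IsMatchingIn H (matchOf 𝒜) := by
  rw [matchOf_eq]
  constructor
  · rintro m ⟨A, hA, hm⟩
    exact enameToSym_mem_edgeSet (hvalid A hA) hm
  · rintro m ⟨A, hA, hm⟩ m' ⟨B, hB, hm'⟩ hne x hx hx'
    have hAB : A = B := (hindep.pairwiseDisjoint_parts hvalid).elim_set hA hB _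
      (elim_vert_bot_mem_parts H hm hx) (elim_vert_bot_mem_parts H hm' hx')
    exact hne <| Option.mem_unique hm (hAB ▸ hm')

theorem IndepFamily.finsum_parts_le_aConst [Finite W] (hvalid : ∀ A ∈ 𝒜, ValidAtom H A)
    (hindep : IndepFamily H 𝒜) {f : AtomLabel W → ℤ} (hf : ∀ b ∈ elementary H, 0 ≤ f b) :
    ∑ᶠ A ∈ 𝒜, ∑ᶠ b ∈ A.parts H, f b ≤ aConst H f :=
  calc ∑ᶠ A ∈ 𝒜, ∑ᶠ b ∈ A.parts H, f b
      = ∑ᶠ b ∈ ⋃ A ∈ 𝒜, A.parts H, f b :=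
        (finsum_mem_biUnion (hindep.pairwiseDisjoint_parts hvalid) (Set.toFinite _)
          fun _ _ ↦ Set.toFinite _).symm
    _ ≤ ∑ᶠ b ∈ elementary H, f b :=
        finsum_mem_le_finsum_mem_of_subset (Set.toFinite _)
          (Set.iUnion₂_subset fun A hA ↦ parts_subset_elementary (hvalid A hA)) hf
    _ = aConst H f := finsum_mem_elementary H f

theorem stmt8_general [Finite W] {f : AtomLabel W → ℤ} (hf : ∀ b ∈ elementary H, 0 ≤ f b)
    (hvalid : ∀ A ∈ 𝒜, ValidAtom H A) (hindep : IndepFamily H 𝒜) :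
    IsMatchingIn H (matchOf 𝒜) ∧
      -(aConst H f) + (∑ᶠ A ∈ 𝒜, f A) ≤ ∑ᶠ m ∈ matchOf 𝒜, wPrime H f m := by
  refine ⟨hindep.isMatchingIn_matchOf hvalid, ?_⟩
  have weight_matchOf : ∑ᶠ m ∈ matchOf 𝒜, wPrime H f m =
      ∑ᶠ A ∈ 𝒜, A.edgeName.elim 0 (wPrime H f) := by
    rw [matchOf_eq, finsum_mem_filterMap edgeName_inj]
  have weight_family : ∑ᶠ A ∈ 𝒜, f A =
      ∑ᶠ A ∈ 𝒜, A.edgeName.elim 0 (wPrime H f) + ∑ᶠ A ∈ 𝒜, ∑ᶠ b ∈ A.parts H, f b := by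
    rw [← finsum_mem_add_distrib (Set.toFinite _)]
    exact finsum_mem_congr rfl fun A hA ↦ weight_eq_wPrime_add_finsum_parts f (hvalid A hA)
  linarith [hindep.finsum_parts_le_aConst hvalid hf]

/-- if `𝒜` is an independent family of atoms of an extended strip
decomposition `(H, η)` of `G`, then `M(𝒜)` is a matching in `H'` and
`w'(M(𝒜)) ≥ -a + Σ_{A ∈ 𝒜} w(I(A))`. -/
theorem stmt8 {V W : Type} [Fintype V] [Fintype W] (G : SimpleGraph V) (H : SimpleGraph W)
    (D : ESD G H) (w : V → ℕ) (Ifun : AtomLabel W → Set V)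
    (hsub : ∀ a, ValidAtom H a → Ifun a ⊆ D.atomSet a)
    (hind : ∀ a, ValidAtom H a → ∀ x ∈ Ifun a, ∀ y ∈ Ifun a, ¬ G.Adj x y)
    (𝒜 : Set (AtomLabel W)) (hvalid : ∀ a ∈ 𝒜, ValidAtom H a)
    (hindep : IndepFamily H 𝒜) :
    IsMatchingIn H (matchOf 𝒜) ∧
      -(aConst H (wIat w Ifun)) + (∑ᶠ a ∈ 𝒜, wIat w Ifun a) ≤
        ∑ᶠ m ∈ matchOf 𝒜, wPrime H (wIat w Ifun) m := by
  exact stmt8_general (fun _ _ ↦ Int.natCast_nonneg _) hvalid hindep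

end Paper
end
end
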